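/- arXiv:2109.01687 — 6 statements merged into one kernel-verified Lean document; each statement's English description precedes it below -/
import Mathlib

section
/- In PSL(2,ℤ[i]), the principal congruence subgroup Γ(2+2i) is equal to the commutator subgroup of the principal congruence subgroup Γ(1+i). -/
/-- `SL(2, ℤ[i])`: 2×2 matrices over the Gaussian integers of determinant 1. -/
abbrev SL2Zi := Matrix.SpecialLinearGroup (Fin 2) GaussianInt

instance : Fact (Even (Fintype.card (Fin 2))) := ⟨by decide⟩

/-- The subgroup `{±I}` of `SL(2, ℤ[i])`. -/
def PM : Subgroup SL2Zi := Subgroup.zpowers (-1)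

instance : PM.Normal := by
  constructor
  intro x hx g
  obtain ⟨k, rfl⟩ := Subgroup.mem_zpowers_iff.mp hx
  have hc : Commute g ((-1 : SL2Zi) ^ k) := (Commute.neg_one_right g).zpow_right k
  have h : g * (-1 : SL2Zi) ^ k * g⁻¹ = (-1 : SL2Zi) ^ k := by
    rw [hc.eq, mul_assoc, mul_inv_cancel, mul_one]
  rw [h]
  exact Subgroup.mem_zpowers_iff.mpr ⟨k, rfl⟩

/-- `PSL(2, ℤ[i]) = SL(2, ℤ[i]) / {±I}`. -/
abbrev PSL2Zi := SL2Zi ⧸ PM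

/-- The entrywise reduction homomorphism `SL(2, ℤ[i]) → SL(2, ℤ[i]/(β))`. -/
def redMap (β : GaussianInt) :
    SL2Zi →* Matrix.SpecialLinearGroup (Fin 2) (GaussianInt ⧸ Ideal.span {β}) :=
  Matrix.SpecialLinearGroup.map (Ideal.Quotient.mk (Ideal.span {β}))

/-- The principal congruence subgroup `Γ(β)` of `PSL(2, ℤ[i])`: the image in `PSL(2, ℤ[i])`
of the kernel of the reduction map modulo `β`. -/
def Gamma (β : GaussianInt) : Subgroup PSL2Zi :=
  ((redMap β).ker).map (QuotientGroup.mk' PM)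


/-- Membership in the kernel of the reduction map, entrywise. -/
lemma mem_ker_iff (β : GaussianInt) (g : SL2Zi) : g ∈ (redMap β).ker ↔
    β ∣ g.1 0 0 - 1 ∧ β ∣ g.1 0 1 ∧ β ∣ g.1 1 0 ∧ β ∣ g.1 1 1 - 1 := by
  have h1 : ∀ z : GaussianInt, β ∣ z ↔ (Ideal.Quotient.mk (Ideal.span {β})) z = 0 := by
    intro z
    rw [Ideal.Quotient.eq_zero_iff_mem, Ideal.mem_span_singleton]
  rw [MonoidHom.mem_ker, h1, h1, h1, h1, map_sub, map_sub, map_one, sub_eq_zero, sub_eq_zero,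
    Matrix.SpecialLinearGroup.ext_iff]
  simp [redMap, Fin.forall_fin_two]
  tauto

/-- Elements congruent modulo `β` differ by an element of the kernel. -/
lemma mul_inv_mem_ker (β : GaussianInt) (g h : SL2Zi) (H : ∀ i j, β ∣ g.1 i j - h.1 i j) :
    g * h⁻¹ ∈ (redMap β).ker := by
  rw [MonoidHom.mem_ker, map_mul, map_inv, mul_inv_eq_one, Matrix.SpecialLinearGroup.ext_iff]
  intro i j
  have := H i j
  rw [← Ideal.mem_span_singleton, ← Ideal.Quotient.eq] at this
  simpa [redMap] using this

lemma mem_PM (g : SL2Zi) : g ∈ PM ↔ g = 1 ∨ g = -1 := by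
  constructor
  · intro h
    obtain ⟨k, rfl⟩ := Subgroup.mem_zpowers_iff.mp h
    rcases Int.even_or_odd k with hk | hk
    · left; exact hk.neg_one_zpow
    · right; exact hk.neg_one_zpow
  · rintro (rfl | rfl)
    · exact one_mem _
    · exact Subgroup.mem_zpowers _

lemma mem_Gamma_iff (β : GaussianInt) (g : SL2Zi) :
    QuotientGroup.mk' PM g ∈ Gamma β ↔ g ∈ (redMap β).ker ∨ -g ∈ (redMap β).ker := by
  constructor
  · rintro ⟨h, hh, he⟩
    rw [QuotientGroup.mk'_apply, QuotientGroup.mk'_apply, QuotientGroup.eq, mem_PM] at he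
    rcases he with he | he
    · left
      rwa [← inv_mul_eq_one.mp he]
    · right
      have : g = -h := by
        rw [inv_mul_eq_iff_eq_mul] at he
        simpa using he
      rw [this, neg_neg]
      exact hh
  · rintro (h | h)
    · exact ⟨g, h, rfl⟩
    · refine ⟨-g, h, ?_⟩
      rw [QuotientGroup.mk'_apply, QuotientGroup.mk'_apply, QuotientGroup.eq, mem_PM]
      right
      rw [inv_mul_eq_iff_eq_mul]
      simp

lemma parity (z : GaussianInt) : (⟨1, 1⟩ : GaussianInt) ∣ z ∨ (⟨1, 1⟩ : GaussianInt) ∣ z - 1 := by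
  obtain ⟨a, b⟩ := z
  rcases Int.emod_two_eq_zero_or_one (b - a) with h | h
  · left
    exact ⟨⟨(b + a) / 2, (b - a) / 2⟩, by ext <;> simp <;> omega⟩
  · right
    exact ⟨⟨(b + a - 1) / 2, (b - a + 1) / 2⟩, by ext <;> simp <;> omega⟩

lemma not_dvd_one : ¬ (⟨1, 1⟩ : GaussianInt) ∣ 1 := by
  rintro ⟨⟨a, b⟩, h⟩
  have h1 := congrArg Zsqrtd.re h
  have h2 := congrArg Zsqrtd.im h
  simp at h1 h2
  omega

/-- The Gaussian prime `1+i`. -/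
abbrev pp : GaussianInt := ⟨1, 1⟩
/-- The unit `i`. -/
abbrev ii : GaussianInt := ⟨0, 1⟩

lemma pp2 : pp * pp = 2 * ii := by ext <;> simp
lemma pp3 : (⟨2, 2⟩ : GaussianInt) = pp * pp * pp * (-ii) := by ext <;> simp
lemma pp3' : (⟨2, 2⟩ : GaussianInt) = 2 * pp := by ext <;> simp
lemma ii2 : ii * ii = -1 := by ext <;> simp
lemma ppi : pp = 1 + ii := by ext <;> simp

/-- Commutation modulo `(1+i)^3` up to sign. -/
lemma comm_mod (a b : SL2Zi) (ha : a ∈ (redMap pp).ker) (hb : b ∈ (redMap pp).ker) :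
    (∀ i j, (⟨2, 2⟩ : GaussianInt) ∣ (a * b).1 i j - (b * a).1 i j) ∨
    (∀ i j, (⟨2, 2⟩ : GaussianInt) ∣ (a * b).1 i j - (-(b * a)).1 i j) := by
  rw [mem_ker_iff] at ha hb
  have da := a.2
  have db := b.2
  rw [Matrix.det_fin_two] at da db
  obtain ⟨⟨p, hp⟩, ⟨q, hq⟩, ⟨r, hr⟩, ⟨s, hs⟩⟩ := ha
  obtain ⟨⟨p', hp'⟩, ⟨q', hq'⟩, ⟨r', hr'⟩, ⟨s', hs'⟩⟩ := hb
  rw [sub_eq_iff_eq_add] at hp hs hp' hs'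
  have hpp : pp ≠ 0 := by decide
  rw [hp, hq, hr, hs] at da
  rw [hp', hq', hr', hs'] at db
  have ta : p = -s - pp * (p * s - q * r) := by
    apply mul_left_cancel₀ hpp
    linear_combination da
  have tb : p' = -s' - pp * (p' * s' - q' * r') := by
    apply mul_left_cancel₀ hpp
    linear_combination db
  generalize p * s - q * r = m at ta
  generalize p' * s' - q' * r' = m' at tb
  have h2 : (2 : GaussianInt) = pp * pp * (-ii) := by ext <;> simp
  have hps : p - s = pp * (ii * pp * s - m) := by linear_combination ta - s * h2
  have hps' : p' - s' = pp * (ii * pp * s' - m') := by linear_combination tb - s' * h2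
  have e := pp2
  have e1 := ppi
  have i2 := ii2
  rcases parity (q * r' - q' * r) with ⟨t, ht⟩ | ⟨t, ht⟩
  · left
    simp only [Fin.forall_fin_two, Matrix.SpecialLinearGroup.coe_mul, Matrix.mul_apply,
      Fin.sum_univ_two]
    rw [hp, hq, hr, hs, hp', hq', hr', hs', pp3']
    refine ⟨⟨⟨ii * t, ?_⟩, ⟨ii * ((ii * pp * s - m) * q' - (ii * pp * s' - m') * q), ?_⟩⟩,
      ⟨⟨ii * (-(ii * pp * s - m) * r' + (ii * pp * s' - m') * r), ?_⟩, ⟨- ii * t, ?_⟩⟩⟩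
    · linear_combination (q * r' - q' * r) * e + 2 * ii * ht
    · linear_combination ((p - s) * q' - (p' - s') * q) * e + 2 * ii * (q' * hps - q * hps')
    · linear_combination (-(p - s) * r' + (p' - s') * r) * e + 2 * ii * (-r' * hps + r * hps')
    · linear_combination -(q * r' - q' * r) * e - 2 * ii * ht
  · right
    simp only [Fin.forall_fin_two, Matrix.SpecialLinearGroup.coe_mul, Matrix.mul_apply,
      Matrix.SpecialLinearGroup.coe_neg, Matrix.neg_apply, Fin.sum_univ_two]
    rw [hp, hq, hr, hs, hp', hq', hr', hs', pp3']
    refine ⟨⟨⟨p + p' + pp * p * p' + ii * t + 1 + pp * q' * r, ?_⟩,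
      ⟨q + q' - ii * q' * m - ii * q * m', ?_⟩⟩,
      ⟨⟨r + r' - ii * r' * m - ii * r * m', ?_⟩,
      ⟨s + s' + pp * s * s' + ii * t + 1 + pp * q' * r, ?_⟩⟩⟩
    · linear_combination (q * r' + q' * r - 2 * q' * r) * e + 2 * ii * ht - 2 * e1
    · linear_combination (q' * (p + s) + q * (p' + s')) * e + 2 * ii * (q' * ta + q * tb)
    · linear_combination (r' * (p + s) + r * (p' + s')) * e + 2 * ii * (r' * ta + r * tb)
    · linear_combination (q * r' + q' * r - 2 * q' * r) * e + 2 * ii * ht - 2 * e1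

lemma commutator_le_Gamma : ⁅Gamma pp, Gamma pp⁆ ≤ Gamma ⟨2, 2⟩ := by
  rw [Subgroup.commutator_le]
  rintro _ ⟨a, ha, rfl⟩ _ ⟨b, hb, rfl⟩
  rw [← map_commutatorElement, mem_Gamma_iff, commutatorElement_def]
  have e1 : a * b * a⁻¹ * b⁻¹ = a * b * (b * a)⁻¹ := by group
  rw [e1]
  rcases comm_mod a b ha hb with h | h
  · left
    exact mul_inv_mem_ker _ _ _ h
  · right
    have := mul_inv_mem_ker _ _ _ h
    have e2 : -(a * b * (b * a)⁻¹) = a * b * (-(b * a))⁻¹ := by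
      rw [eq_mul_inv_iff_mul_eq, neg_mul_neg, inv_mul_cancel_right]
    rw [e2]
    exact this

/-- Upper unipotent. -/
def U (x : GaussianInt) : SL2Zi := ⟨!![1, x; 0, 1], by simp [Matrix.det_fin_two]⟩
/-- Lower unipotent. -/
def L (x : GaussianInt) : SL2Zi := ⟨!![1, 0; x, 1], by simp [Matrix.det_fin_two]⟩
/-- Diagonal matrix. -/
def Dg (a d : GaussianInt) (h : a * d = 1) : SL2Zi :=
  ⟨!![a, 0; 0, d], by simp [Matrix.det_fin_two, h]⟩

lemma sl_ext {g h : SL2Zi} (h00 : g.1 0 0 = h.1 0 0) (h01 : g.1 0 1 = h.1 0 1)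
    (h10 : g.1 1 0 = h.1 1 0) (h11 : g.1 1 1 = h.1 1 1) : g = h := by
  rw [Matrix.SpecialLinearGroup.ext_iff]
  simp only [Fin.forall_fin_two]
  exact ⟨⟨h00, h01⟩, ⟨h10, h11⟩⟩

lemma mul00 (g h : SL2Zi) : (g * h).1 0 0 = g.1 0 0 * h.1 0 0 + g.1 0 1 * h.1 1 0 := by
  rw [Matrix.SpecialLinearGroup.coe_mul, Matrix.mul_apply, Fin.sum_univ_two]
lemma mul01 (g h : SL2Zi) : (g * h).1 0 1 = g.1 0 0 * h.1 0 1 + g.1 0 1 * h.1 1 1 := by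
  rw [Matrix.SpecialLinearGroup.coe_mul, Matrix.mul_apply, Fin.sum_univ_two]
lemma mul10 (g h : SL2Zi) : (g * h).1 1 0 = g.1 1 0 * h.1 0 0 + g.1 1 1 * h.1 1 0 := by
  rw [Matrix.SpecialLinearGroup.coe_mul, Matrix.mul_apply, Fin.sum_univ_two]
lemma mul11 (g h : SL2Zi) : (g * h).1 1 1 = g.1 1 0 * h.1 0 1 + g.1 1 1 * h.1 1 1 := by
  rw [Matrix.SpecialLinearGroup.coe_mul, Matrix.mul_apply, Fin.sum_univ_two]

lemma U_add (x y : GaussianInt) : U x * U y = U (x + y) := by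
  apply sl_ext <;> simp only [mul00, mul01, mul10, mul11] <;> simp [U, add_comm]
lemma L_add (x y : GaussianInt) : L x * L y = L (x + y) := by
  apply sl_ext <;> simp only [mul00, mul01, mul10, mul11] <;> simp [L]
lemma U_zero : U 0 = 1 := by
  apply sl_ext <;> simp [U]
lemma L_zero : L 0 = 1 := by
  apply sl_ext <;> simp [L]
lemma U_inv (x : GaussianInt) : (U x)⁻¹ = U (-x) := by
  rw [inv_eq_iff_mul_eq_one, U_add, add_neg_cancel, U_zero]
lemma L_inv (x : GaussianInt) : (L x)⁻¹ = L (-x) := by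
  rw [inv_eq_iff_mul_eq_one, L_add, add_neg_cancel, L_zero]

lemma U_mem {x : GaussianInt} (h : pp ∣ x) : U x ∈ (redMap pp).ker := by
  rw [mem_ker_iff]; simpa [U] using h
lemma L_mem {x : GaussianInt} (h : pp ∣ x) : L x ∈ (redMap pp).ker := by
  rw [mem_ker_iff]; simpa [L] using h

/-- The preimage of the commutator subgroup in `SL(2, ℤ[i])`. -/
def NN : Subgroup SL2Zi := (⁅Gamma pp, Gamma pp⁆).comap (QuotientGroup.mk' PM)

instance : (Gamma pp).Normal := by
  unfold Gamma
  exact Subgroup.Normal.map inferInstance _ (QuotientGroup.mk'_surjective _)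

instance : NN.Normal := by
  unfold NN
  infer_instance

lemma comm_mem_NN {a b : SL2Zi} (ha : a ∈ (redMap pp).ker) (hb : b ∈ (redMap pp).ker) :
    a * b * a⁻¹ * b⁻¹ ∈ NN := by
  unfold NN
  rw [Subgroup.mem_comap, map_mul, map_mul, map_mul, map_inv, map_inv]
  exact Subgroup.commutator_mem_commutator ⟨a, ha, rfl⟩ ⟨b, hb, rfl⟩

lemma PM_le_NN {a : SL2Zi} (h : a ∈ PM) : a ∈ NN := by
  unfold NN
  rw [Subgroup.mem_comap, QuotientGroup.mk'_apply, (QuotientGroup.eq_one_iff a).mpr h]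
  exact one_mem _

lemma int_aux (R C M K : ℤ) (hR : 0 < R) (hRC : R < C) (h : M ^ 2 + K ^ 2 = R * C)
    (hK : K ^ 2 ≤ M ^ 2) (hM : 0 ≤ M) : R < 2 * M := by
  by_contra hcon
  push Not at hcon
  have hMC : M < C := by nlinarith [sq_nonneg K]
  have hM0 : 0 < M := by
    rcases hM.lt_or_eq with h0 | h0
    · exact h0
    · subst h0
      nlinarith
  nlinarith [mul_le_mul_of_nonneg_right hcon (hR.le.trans hRC.le), mul_lt_mul_of_pos_left hMC hM0]

/-- Euclidean division with even quotient. -/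
lemma even_div (a c : GaussianInt) (hc : c ≠ 0) (hpar : ¬ pp ∣ a - c) :
    ∃ q, pp ∣ q ∧ (a + q * c).norm < c.norm := by
  have hdiv := EuclideanDomain.div_add_mod a c
  have hlt : (a % c).norm < c.norm := by
    have := GaussianInt.norm_mod_lt a hc
    exact this
  set r := a % c with hr
  set q := a / c with hq
  rcases parity q with h | h
  · refine ⟨-q, (dvd_neg).mpr h, ?_⟩
    have : a + -q * c = r := by linear_combination -hdiv
    rwa [this]
  · have hr0 : r ≠ 0 := by
      intro h0
      apply hpar
      have : a - c = (q - 1) * c := by linear_combination -hdiv + h0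
      rw [this]
      exact h.mul_right c
    have key : ∃ ε : GaussianInt, pp ∣ ε - 1 ∧ (r - ε * c).norm < c.norm := by
      have hrp : 0 < r.norm := by
        rcases (GaussianInt.norm_nonneg r).lt_or_eq with h1 | h1
        · exact h1
        · exact absurd (GaussianInt.norm_eq_zero.mp h1.symm) hr0
      clear_value r q
      obtain ⟨r1, r2⟩ := r
      obtain ⟨c1, c2⟩ := c
      simp only [Zsqrtd.norm_def] at hlt hrp
      have id1 : (r1 * c1 + r2 * c2) ^ 2 + (r2 * c1 - r1 * c2) ^ 2 =
        (r1 * r1 - -1 * r2 * r2) * (c1 * c1 - -1 * c2 * c2) := by ring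
      rcases le_total ((r2 * c1 - r1 * c2) ^ 2) ((r1 * c1 + r2 * c2) ^ 2) with hle | hle
      · rcases le_total 0 (r1 * c1 + r2 * c2) with h0 | h0
        · have := int_aux _ _ _ _ hrp hlt id1 hle h0
          refine ⟨1, by simp, ?_⟩
          simp [Zsqrtd.norm_def]
          nlinarith
        · have := int_aux _ _ (-(r1 * c1 + r2 * c2)) (r2 * c1 - r1 * c2) hrp hlt
            (by rw [neg_sq]; exact id1) (by rw [neg_sq]; exact hle) (by linarith)
          refine ⟨-1, ⟨⟨-1, 1⟩, by ext <;> simp⟩, ?_⟩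
          simp [Zsqrtd.norm_def]
          nlinarith
      · rw [add_comm] at id1
        rcases le_total 0 (r2 * c1 - r1 * c2) with h0 | h0
        · have := int_aux _ _ _ _ hrp hlt id1 hle h0
          refine ⟨⟨0, 1⟩, ⟨⟨0, 1⟩, by ext <;> simp⟩, ?_⟩
          simp [Zsqrtd.norm_def]
          nlinarith
        · have := int_aux _ _ (-(r2 * c1 - r1 * c2)) (r1 * c1 + r2 * c2) hrp hlt
            (by rw [neg_sq]; exact id1) (by rw [neg_sq]; exact hle) (by linarith)
          refine ⟨⟨0, -1⟩, ⟨⟨-1, 0⟩, by ext <;> simp⟩, ?_⟩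
          simp [Zsqrtd.norm_def]
          nlinarith
    obtain ⟨ε, he, hn⟩ := key
    refine ⟨-(q + ε), ?_, ?_⟩
    · rw [dvd_neg]
      have : q + ε = (q - 1) + (ε - 1) + pp * (-ii + 1) := by
        have := ppi
        have := ii2
        linear_combination (ii-1) * ppi + ii2
      rw [this]
      exact ((h.add he).add (Dvd.intro _ rfl))
    · have : a + -(q + ε) * c = r - ε * c := by linear_combination -hdiv
      rwa [this]

/-- Normal form modulo the commutator subgroup. -/
def NF (g : SL2Zi) : Prop := ∃ n ∈ NN, ∃ x y a d : GaussianInt, ∃ h : a * d = 1,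
  pp ∣ x ∧ pp ∣ y ∧ g = n * U x * L y * Dg a d h

lemma NF_U {g : SL2Zi} {z : GaussianInt} (hz : pp ∣ z) (h : NF (U z * g)) : NF g := by
  obtain ⟨n, hn, x, y, a, d, h, hx, hy, e⟩ := h
  refine ⟨U (-z) * n * (U (-z))⁻¹, Subgroup.Normal.conj_mem inferInstance n hn _,
    -z + x, y, a, d, h, (dvd_neg.mpr hz).add hx, hy, ?_⟩
  rw [← U_add]
  have : g = U (-z) * (U z * g) := by rw [← mul_assoc, U_add, neg_add_cancel, U_zero, one_mul]
  rw [this, e]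
  group

lemma NF_L {g : SL2Zi} {z : GaussianInt} (hz : pp ∣ z) (h : NF (L z * g)) : NF g := by
  obtain ⟨n, hn, x, y, a, d, h, hx, hy, e⟩ := h
  refine ⟨(L (-z) * n * (L (-z))⁻¹) * (L (-z) * U x * (L (-z))⁻¹ * (U x)⁻¹),
    mul_mem (Subgroup.Normal.conj_mem inferInstance n hn _)
      (comm_mem_NN (L_mem (dvd_neg.mpr hz)) (U_mem hx)),
    x, -z + y, a, d, h, hx, (dvd_neg.mpr hz).add hy, ?_⟩
  rw [← L_add]
  have : g = L (-z) * (L z * g) := by rw [← mul_assoc, L_add, neg_add_cancel, L_zero, one_mul]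
  rw [this, e]
  group

lemma NF_all : ∀ (k : ℕ) (g : SL2Zi), g ∈ (redMap pp).ker →
    (g.1 0 0).norm + (g.1 1 0).norm < k → NF g := by
  intro k
  induction k with
  | zero =>
    intro g _ h
    have h1 := GaussianInt.norm_nonneg (g.1 0 0)
    have h2 := GaussianInt.norm_nonneg (g.1 1 0)
    push_cast at h
    linarith
  | succ k ih =>
    intro g hg hk
    have hg' := (mem_ker_iff _ _).mp hg
    obtain ⟨h00, h01, h10, h11⟩ := hg'
    push_cast at hk
    by_cases hc : g.1 1 0 = 0
    · have hd := g.2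
      rw [Matrix.det_fin_two, hc, mul_zero, sub_zero] at hd
      refine ⟨1, one_mem _, g.1 0 1 * g.1 0 0, 0, g.1 0 0, g.1 1 1, hd, h01.mul_right _,
        dvd_zero _, ?_⟩
      rw [L_zero, one_mul, mul_one]
      apply sl_ext <;> simp only [mul00, mul01, mul10, mul11] <;> simp [U, Dg, hc]
      rw [mul_assoc, hd, mul_one]
    · have hpar : ¬ pp ∣ g.1 0 0 - g.1 1 0 := by
        intro h
        apply not_dvd_one
        have : (1 : GaussianInt) = (g.1 0 0 - g.1 1 0) + g.1 1 0 - (g.1 0 0 - 1) := by ring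
        rw [this]
        exact dvd_sub (h.add h10) h00
      have hpar' : ¬ pp ∣ g.1 1 0 - g.1 0 0 := by rwa [dvd_sub_comm]
      have ha : g.1 0 0 ≠ 0 := by
        intro h
        rw [h, zero_sub, dvd_neg] at h00
        exact not_dvd_one h00
      rcases le_or_gt (g.1 1 0).norm (g.1 0 0).norm with hle | hlt
      · obtain ⟨q, hq, hn⟩ := even_div _ _ hc hpar
        refine NF_U hq (ih _ (mul_mem (U_mem hq) hg) ?_)
        have e1 : (U q * g).1 0 0 = g.1 0 0 + q * g.1 1 0 := by rw [mul00]; simp [U]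
        have e2 : (U q * g).1 1 0 = g.1 1 0 := by rw [mul10]; simp [U]
        rw [e1, e2]
        linarith
      · obtain ⟨q, hq, hn⟩ := even_div _ _ ha hpar'
        refine NF_L hq (ih _ (mul_mem (L_mem hq) hg) ?_)
        have e1 : (L q * g).1 1 0 = g.1 1 0 + q * g.1 0 0 := by
          rw [mul10]; simp [L, add_comm]
        have e2 : (L q * g).1 0 0 = g.1 0 0 := by rw [mul00]; simp [L]
        rw [e1, e2]
        linarith

lemma Dg_i_mem : Dg ii (-ii) (by rw [mul_neg, ii2, neg_neg]) ∈ (redMap pp).ker := by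
  rw [mem_ker_iff]
  simp only [Dg]
  exact ⟨⟨⟨0, 1⟩, by ext <;> simp⟩, by simp, by simp, ⟨⟨-1, 0⟩, by ext <;> simp⟩⟩

lemma U_mem_NN {x : GaussianInt} (h : (⟨2, 2⟩ : GaussianInt) ∣ x) : U x ∈ NN := by
  obtain ⟨t, rfl⟩ := h
  have := comm_mem_NN Dg_i_mem (U_mem (x := -(pp * t)) (dvd_neg.mpr (Dvd.intro _ rfl)))
  convert this using 1
  rw [eq_mul_inv_iff_mul_eq, eq_mul_inv_iff_mul_eq, U_add, pp3']
  apply sl_ext <;> simp only [mul00, mul01, mul10, mul11] <;> simp [U, Dg]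
  ring

lemma L_mem_NN {x : GaussianInt} (h : (⟨2, 2⟩ : GaussianInt) ∣ x) : L x ∈ NN := by
  obtain ⟨t, rfl⟩ := h
  have := comm_mem_NN Dg_i_mem (L_mem (x := -(pp * t)) (dvd_neg.mpr (Dvd.intro _ rfl)))
  convert this using 1
  rw [eq_mul_inv_iff_mul_eq, eq_mul_inv_iff_mul_eq, L_add, pp3']
  apply sl_ext <;> simp only [mul00, mul01, mul10, mul11] <;> simp [L, Dg]
  ring

/-- Units congruent to `±1` modulo `2+2i` are `±1`. -/
lemma unit_aux (d : GaussianInt) (hd : d.norm = 1)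
    (h : (⟨2, 2⟩ : GaussianInt) ∣ d - 1 ∨ (⟨2, 2⟩ : GaussianInt) ∣ -d - 1) : d = 1 ∨ d = -1 := by
  obtain ⟨x, y⟩ := d
  simp only [Zsqrtd.norm_def] at hd
  have hy : y = 0 := by
    have hy2 : 2 ∣ y := by
      rcases h with ⟨⟨s, t⟩, h⟩ | ⟨⟨s, t⟩, h⟩
      · have := congrArg Zsqrtd.im h
        simp at this
        omega
      · have := congrArg Zsqrtd.im h
        simp at this
        omega
    obtain ⟨t, rfl⟩ := hy2
    have : t * t ≤ 0 := by nlinarith [mul_self_nonneg x]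
    have : t = 0 := by nlinarith [mul_self_nonneg t]
    simp [this]
  subst hy
  have : (x - 1) * (x + 1) = 0 := by linarith
  rcases mul_eq_zero.mp this with h | h
  · left; ext <;> simp; linarith
  · right; ext <;> simp; linarith

lemma ker_three_le : (redMap ⟨2, 2⟩).ker ≤ NN := by
  intro g hg
  have hg1 : g ∈ (redMap pp).ker := by
    rw [mem_ker_iff] at hg ⊢
    have hd : pp ∣ (⟨2, 2⟩ : GaussianInt) := pp3' ▸ Dvd.intro_left _ rfl
    exact ⟨hd.trans hg.1, hd.trans hg.2.1, hd.trans hg.2.2.1, hd.trans hg.2.2.2⟩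
  obtain ⟨n, hn, x, y, a, d, h, hx, hy, e⟩ := NF_all
    (((g.1 0 0).norm + (g.1 1 0).norm).toNat + 1) g hg1 (by push_cast; omega)
  have hnG : QuotientGroup.mk' PM n ∈ Gamma ⟨2, 2⟩ := commutator_le_Gamma hn
  have hgG : QuotientGroup.mk' PM g ∈ Gamma ⟨2, 2⟩ := ⟨g, hg, rfl⟩
  have e' : U x * L y * Dg a d h = n⁻¹ * g := by rw [e]; group
  have hw : QuotientGroup.mk' PM (U x * L y * Dg a d h) ∈ Gamma ⟨2, 2⟩ := by
    rw [e', map_mul, map_inv]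
    exact mul_mem (inv_mem hnG) hgG
  rw [mem_Gamma_iff, mem_ker_iff, mem_ker_iff] at hw
  have w01 : (U x * L y * Dg a d h).1 0 1 = x * d := by
    rw [mul01, mul01, mul00]; simp [U, L, Dg]
  have w10 : (U x * L y * Dg a d h).1 1 0 = y * a := by
    rw [mul10, mul10, mul11]; simp [U, L, Dg]
  have w11 : (U x * L y * Dg a d h).1 1 1 = d := by
    rw [mul11, mul10, mul11]; simp [U, L, Dg]
  simp only [Matrix.SpecialLinearGroup.coe_neg, Matrix.neg_apply, w01, w10, w11, dvd_neg] at hw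
  have hxd : (⟨2, 2⟩ : GaussianInt) ∣ x * d := by tauto
  have hya : (⟨2, 2⟩ : GaussianInt) ∣ y * a := by tauto
  have hd1 : (⟨2, 2⟩ : GaussianInt) ∣ d - 1 ∨ (⟨2, 2⟩ : GaussianInt) ∣ -d - 1 := by tauto
  have hx2 : (⟨2, 2⟩ : GaussianInt) ∣ x := by
    have := hxd.mul_right a
    rwa [mul_assoc, mul_comm d a, h, mul_one] at this
  have hy2 : (⟨2, 2⟩ : GaussianInt) ∣ y := by
    have := hya.mul_right d
    rwa [mul_assoc, h, mul_one] at this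
  have hdn : d.norm = 1 := by
    have h1 := congrArg Zsqrtd.norm h
    rw [Zsqrtd.norm_mul, Zsqrtd.norm_one] at h1
    exact Int.eq_one_of_mul_eq_one_left (GaussianInt.norm_nonneg d) h1
  have hD : Dg a d h ∈ NN := by
    apply PM_le_NN
    rw [mem_PM]
    rcases unit_aux d hdn hd1 with rfl | rfl
    · left
      have : a = 1 := by simpa using h
      apply sl_ext <;> simp [Dg, this]
    · right
      have : a = -1 := by linear_combination -h
      apply sl_ext <;> simp [Dg, this]
  rw [e]
  exact mul_mem (mul_mem (mul_mem hn (U_mem_NN hx2)) (L_mem_NN hy2)) hD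

/-- In `PSL(2, ℤ[i])`, the principal congruence subgroup `Γ(2+2i)` equals the commutator
subgroup of the principal congruence subgroup `Γ(1+i)`. -/
theorem Gamma_two_two_eq_commutator_Gamma_one_one :
    Gamma ⟨2, 2⟩ = ⁅Gamma ⟨1, 1⟩, Gamma ⟨1, 1⟩⁆ := by
  apply le_antisymm
  · rintro _ ⟨g, hg, rfl⟩
    exact ker_three_le hg
  · exact commutator_le_Gamma
end

section
/- The abelianization of the principal congruence subgroup Γ(1+i) of PSL(2,ℤ[i]) is isomorphic to (ℤ/2ℤ)⁵. -/
open Matrix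

namespace GammaAb

/-- The prime `1 + i`. -/
def lam : GaussianInt := ⟨1, 1⟩

/-- The kernel of reduction modulo `1 + i`. -/
abbrev K : Subgroup SL2Zi := (redMap ⟨1, 1⟩).ker

lemma dvd_iff (z : GaussianInt) : lam ∣ z ↔ (z.re + z.im) % 2 = 0 := by
  constructor
  · rintro ⟨w, rfl⟩
    simp only [lam, Zsqrtd.re_mul, Zsqrtd.im_mul]
    omega
  · intro h
    refine ⟨⟨(z.re + z.im) / 2, (z.im - z.re) / 2⟩, ?_⟩
    ext
    · simp only [lam, Zsqrtd.re_mul, Zsqrtd.im_mul]; omega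
    · simp only [lam, Zsqrtd.re_mul, Zsqrtd.im_mul]; omega

lemma mem_K (A : SL2Zi) : A ∈ K ↔
    lam ∣ (A.1 0 0 - 1) ∧ lam ∣ A.1 0 1 ∧ lam ∣ A.1 1 0 ∧ lam ∣ (A.1 1 1 - 1) := by
  have key : ∀ z w : GaussianInt, (Ideal.Quotient.mk (Ideal.span {(⟨1, 1⟩ : GaussianInt)})) z
      = (Ideal.Quotient.mk (Ideal.span {(⟨1, 1⟩ : GaussianInt)})) w ↔ lam ∣ z - w := by
    intro z w
    rw [Ideal.Quotient.eq, Ideal.mem_span_singleton]; rfl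
  rw [← key, ← key, MonoidHom.mem_ker, Matrix.SpecialLinearGroup.ext_iff]
  have k2 := fun z => key z 0
  simp only [map_zero, sub_zero] at k2
  rw [← k2, ← k2]
  simp [Fin.forall_fin_two, redMap, and_assoc]

/-- Division by `1 + i`. -/
def half (z : GaussianInt) : GaussianInt := ⟨(z.re + z.im) / 2, (z.im - z.re) / 2⟩

lemma half_lam (w : GaussianInt) : half (lam * w) = w := by
  ext
  · simp only [half, lam, Zsqrtd.re_mul, Zsqrtd.im_mul]; omega
  · simp only [half, lam, Zsqrtd.re_mul, Zsqrtd.im_mul]; omega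

/-- The five characters as a function. -/
def chi (A : SL2Zi) : Fin 5 → ZMod 2 :=
  ![((half (A.1 0 0 * A.1 0 1)).re : ZMod 2), ((half (A.1 0 0 * A.1 0 1)).im : ZMod 2),
    ((half (A.1 0 0 * A.1 1 0)).re : ZMod 2), ((half (A.1 0 0 * A.1 1 0)).im : ZMod 2),
    ((A.1 0 0).im : ZMod 2)]

lemma cast_re {z w : GaussianInt} (h : ∃ v, z = w + 2 * v) : (z.re : ZMod 2) = w.re := by
  obtain ⟨v, rfl⟩ := h
  have : (2 : ZMod 2) = 0 := rfl
  simp [Zsqrtd.re_mul, this]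

lemma cast_im {z w : GaussianInt} (h : ∃ v, z = w + 2 * v) : (z.im : ZMod 2) = w.im := by
  obtain ⟨v, rfl⟩ := h
  have : (2 : ZMod 2) = 0 := rfl
  simp [Zsqrtd.im_mul, this]

lemma det_eq (A : SL2Zi) : A.1 0 0 * A.1 1 1 - A.1 0 1 * A.1 1 0 = 1 := by
  have := A.2; rwa [Matrix.det_fin_two] at this

lemma two_eq : (2 : GaussianInt) = lam * ⟨1, -1⟩ := by decide

lemma lam_sq : lam * lam = 2 * ⟨0, 1⟩ := by decide

/-- structure of elements of `K` -/
lemma K_str {A : SL2Zi} (h : A ∈ K) : ∃ b c u v : GaussianInt,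
    A.1 0 1 = lam * b ∧ A.1 1 0 = lam * c ∧ A.1 0 0 * A.1 0 0 = 1 + 2 * u ∧
    A.1 1 1 = A.1 0 0 + 2 * v := by
  obtain ⟨⟨a, ha⟩, ⟨b, hb⟩, ⟨c, hc⟩, -⟩ := (mem_K A).1 h
  have hd := det_eq A
  have ha' : A.1 0 0 = 1 + lam * a := by linear_combination ha
  have hu : A.1 0 0 * A.1 0 0 = 1 + 2 * (lam * a + ⟨0, 1⟩ * a * a) := by
    rw [ha']; linear_combination a * a * lam_sq
  refine ⟨b, c, _, A.1 0 0 * (⟨0, 1⟩ * b * c) - (lam * a + ⟨0, 1⟩ * a * a) * A.1 1 1,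
    hb, hc, hu, ?_⟩
  have h1 : A.1 0 0 * A.1 1 1 = 1 + 2 * (⟨0, 1⟩ * b * c) := by
    rw [hb, hc] at hd
    linear_combination hd + b * c * lam_sq
  linear_combination A.1 0 0 * h1 - A.1 1 1 * hu

lemma chi_mul {A B : SL2Zi} (hA : A ∈ K) (hB : B ∈ K) : chi (A * B) = chi A + chi B := by
  obtain ⟨b, c, u, v, hb, hc, hu, hv⟩ := K_str hA
  obtain ⟨b', c', u', v', hb', hc', hu', hv'⟩ := K_str hB
  have hoA := (dvd_iff _).1 ((mem_K A).1 hA).1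
  have hoB := (dvd_iff _).1 ((mem_K B).1 hB).1
  have e00 : (A * B).1 0 0 = A.1 0 0 * B.1 0 0 + A.1 0 1 * B.1 1 0 := by
    simp [Matrix.mul_apply, Fin.sum_univ_two]
  have e01 : (A * B).1 0 1 = A.1 0 0 * B.1 0 1 + A.1 0 1 * B.1 1 1 := by
    simp [Matrix.mul_apply, Fin.sum_univ_two]
  have e10 : (A * B).1 1 0 = A.1 1 0 * B.1 0 0 + A.1 1 1 * B.1 1 0 := by
    simp [Matrix.mul_apply, Fin.sum_univ_two]
  unfold chi
  rw [e00, e01, e10]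
  generalize A.1 0 0 = a at *
  generalize B.1 0 0 = a' at *
  rw [hb, hc, hb', hc', hv, hv']
  have f00 : a * a' + lam * b * (lam * c') = a * a' + 2 * (⟨0, 1⟩ * b * c') := by
    linear_combination b * c' * lam_sq
  rw [f00]
  have g1 : half (a * (lam * b)) = a * b := by
    rw [← half_lam (a * b)]; congr 1; ring
  have g2 : half (a' * (lam * b')) = a' * b' := by
    rw [← half_lam (a' * b')]; congr 1; ring
  have g3 : half (a * (lam * c)) = a * c := by
    rw [← half_lam (a * c)]; congr 1; ring
  have g4 : half (a' * (lam * c')) = a' * c' := by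
    rw [← half_lam (a' * c')]; congr 1; ring
  set w : GaussianInt := ⟨0, 1⟩ * b * c' with hw
  have g5 : half ((a * a' + 2 * w) * (a * (lam * b') + lam * b * (a' + 2 * v')))
      = (a * a' + 2 * w) * (a * b' + b * (a' + 2 * v')) := by
    rw [← half_lam ((a * a' + 2 * w) * (a * b' + b * (a' + 2 * v')))]; congr 1; ring
  have g6 : half ((a * a' + 2 * w) * (lam * c * a' + (a + 2 * v) * (lam * c')))
      = (a * a' + 2 * w) * (c * a' + (a + 2 * v) * c') := by
    rw [← half_lam ((a * a' + 2 * w) * (c * a' + (a + 2 * v) * c'))]; congr 1; ring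
  rw [g1, g2, g3, g4, g5, g6]
  have k1 : ∃ t, (a * a' + 2 * w) * (a * b' + b * (a' + 2 * v')) = (a * b + a' * b') + 2 * t := by
    refine ⟨u * a' * b' + u' * a * b + a * a' * b * v' + w * (a * b' + b * (a' + 2 * v')), ?_⟩
    linear_combination a' * b' * hu + a * b * hu'
  have k2 : ∃ t, (a * a' + 2 * w) * (c * a' + (a + 2 * v) * c') = (a * c + a' * c') + 2 * t := by
    refine ⟨u * a' * c' + u' * a * c + a * a' * c' * v + w * (c * a' + (a + 2 * v) * c'), ?_⟩
    linear_combination a' * c' * hu + a * c * hu'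
  have k3 : ((a * a' + 2 * w).im : ZMod 2) = a.im + a'.im := by
    rw [cast_im ⟨w, rfl⟩]
    rw [← Int.cast_add, ZMod.intCast_eq_intCast_iff]
    simp only [Zsqrtd.im_mul, Zsqrtd.re_sub, Zsqrtd.im_sub, Zsqrtd.re_one, Zsqrtd.im_one] at *
    obtain ⟨s, hs⟩ : ∃ s, a.re = 1 - a.im + 2 * s := ⟨(a.re - 1 + a.im) / 2, by omega⟩
    obtain ⟨s', hs'⟩ : ∃ s, a'.re = 1 - a'.im + 2 * s := ⟨(a'.re - 1 + a'.im) / 2, by omega⟩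
    rw [hs, hs']
    apply Int.ModEq.symm
    rw [Int.modEq_iff_dvd]
    exact ⟨- a.im * a'.im + s * a'.im + a.im * s', by push_cast; ring⟩
  rw [cast_re k1, cast_im k1, cast_re k2, cast_im k2, k3]
  ext j
  fin_cases j <;> simp

lemma chi_neg_one_mul (k : ℤ) : chi ((-1 : SL2Zi) ^ k) = 0 := by
  rcases Int.even_or_odd k with h | h
  · rw [h.neg_one_zpow]
    ext j; fin_cases j <;> simp [chi, half]
  · rw [h.neg_one_zpow]
    ext j; fin_cases j <;> simp [chi, half]

/-- upper unipotent -/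
def T (x : GaussianInt) : SL2Zi := ⟨!![1, x; 0, 1], by simp⟩
/-- lower unipotent -/
def L (x : GaussianInt) : SL2Zi := ⟨!![1, 0; x, 1], by simp⟩
/-- diagonal element of order 4 -/
def D : SL2Zi := ⟨!![⟨0, 1⟩, 0; 0, ⟨0, -1⟩], by rw [Matrix.det_fin_two_of]; decide⟩

/-- the five generators -/
def gen : Fin 5 → SL2Zi := ![T ⟨1, 1⟩, T ⟨-1, 1⟩, L ⟨1, 1⟩, L ⟨-1, 1⟩, D]

lemma gen_mem (j : Fin 5) : gen j ∈ K := by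
  rw [mem_K]
  simp only [dvd_iff]
  fin_cases j <;> simp [gen, T, L, D]

lemma chi_gen (j : Fin 5) : chi (gen j) = Pi.single j 1 := by
  fin_cases j <;> (ext k; fin_cases k <;> simp [chi, gen, T, L, D, half, Pi.single_apply])

/-- homomorphism form of `chi` -/
def chiHom : K →* Multiplicative (Fin 5 → ZMod 2) where
  toFun A := Multiplicative.ofAdd (chi A.1)
  map_one' := by
    have := chi_neg_one_mul 0
    rw [zpow_zero] at this
    simp [this]
  map_mul' A B := by
    rw [← ofAdd_add, ← chi_mul A.2 B.2]; rfl

/-- projection to `Gamma` -/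
def proj : K →* Gamma ⟨1, 1⟩ := (QuotientGroup.mk' PM).subgroupMap K

lemma proj_surj : Function.Surjective proj := MonoidHom.subgroupMap_surjective _ _

lemma proj_eq_one {A : K} : proj A = 1 ↔ A.1 ∈ PM := by
  rw [Subtype.ext_iff]
  exact QuotientGroup.eq_one_iff A.1

lemma ker_le : proj.ker ≤ chiHom.ker := by
  intro A hA
  rw [MonoidHom.mem_ker, proj_eq_one] at hA
  obtain ⟨k, hk⟩ := Subgroup.mem_zpowers_iff.mp hA
  rw [MonoidHom.mem_ker]
  change Multiplicative.ofAdd (chi A.1) = 1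
  rw [← hk, chi_neg_one_mul]; rfl

/-- descended to `Gamma` -/
noncomputable def chiGamma : Gamma ⟨1, 1⟩ →* Multiplicative (Fin 5 → ZMod 2) :=
  proj.liftOfSurjective proj_surj ⟨chiHom, ker_le⟩

lemma chiGamma_proj (A : K) : chiGamma (proj A) = chiHom A :=
  MonoidHom.liftOfRightInverse_comp_apply _ _ _ _ _

/-- descended to the abelianization -/
noncomputable def chiAb : Abelianization (Gamma ⟨1, 1⟩) →* Multiplicative (Fin 5 → ZMod 2) :=
  Abelianization.lift chiGamma

/-- map from `K` to the abelianization -/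
def toAb : K →* Abelianization (Gamma ⟨1, 1⟩) := Abelianization.of.comp proj

lemma toAb_surj : Function.Surjective toAb := by
  intro x
  obtain ⟨g, rfl⟩ := QuotientGroup.mk_surjective x
  obtain ⟨A, rfl⟩ := proj_surj g
  exact ⟨A, rfl⟩

lemma chiAb_toAb (A : K) : chiAb (toAb A) = chiHom A := by
  rw [← chiGamma_proj]; exact Abelianization.lift_apply_of _ _

/-- images of the generators -/
def tt (j : Fin 5) : Abelianization (Gamma ⟨1, 1⟩) := toAb ⟨gen j, gen_mem j⟩

lemma tt_sq_of (j : Fin 5) (h : D * gen j * D⁻¹ = (gen j)⁻¹) : tt j * tt j = 1 := by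
  have hD : D ∈ K := gen_mem 4
  have : (⟨D, hD⟩ : K) * ⟨gen j, gen_mem j⟩ * ⟨D, hD⟩⁻¹ = (⟨gen j, gen_mem j⟩ : K)⁻¹ :=
    Subtype.ext h
  have h2 := congrArg toAb this
  rw [map_mul, map_mul, map_inv, map_inv, mul_comm, inv_mul_cancel_left] at h2
  unfold tt
  nth_rewrite 1 [h2]
  exact inv_mul_cancel _

lemma tt_sq (j : Fin 5) : tt j * tt j = 1 := by
  have aux : ∀ A : SL2Zi, D * A = A⁻¹ * D → D * A * D⁻¹ = A⁻¹ := by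
    intro A h; rw [h, mul_inv_cancel_right]
  by_cases hj : j = 4
  · subst hj
    unfold tt
    rw [← map_mul]
    have : proj (⟨gen 4, gen_mem 4⟩ * ⟨gen 4, gen_mem 4⟩) = 1 := by
      rw [proj_eq_one]
      refine Subgroup.mem_zpowers_iff.mpr ⟨1, ?_⟩
      refine Matrix.SpecialLinearGroup.ext _ _ fun a b => ?_
      fin_cases a <;> fin_cases b <;> decide
    change Abelianization.of _ = 1
    rw [this, map_one]
  · apply tt_sq_of
    apply aux
    fin_cases j
    · refine Matrix.SpecialLinearGroup.ext _ _ fun a b => ?_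
      fin_cases a <;> fin_cases b <;>
        decide
    · refine Matrix.SpecialLinearGroup.ext _ _ fun a b => ?_
      fin_cases a <;> fin_cases b <;>
        decide
    · refine Matrix.SpecialLinearGroup.ext _ _ fun a b => ?_
      fin_cases a <;> fin_cases b <;>
        decide
    · refine Matrix.SpecialLinearGroup.ext _ _ fun a b => ?_
      fin_cases a <;> fin_cases b <;>
        decide
    · exact absurd rfl hj

/-- the section -/
def sec : Multiplicative (Fin 5 → ZMod 2) →* Abelianization (Gamma ⟨1, 1⟩) where
  toFun e := ∏ j, tt j ^ (e.toAdd j).val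
  map_one' := by simp
  map_mul' e e' := by
    rw [← Finset.prod_mul_distrib]
    refine Finset.prod_congr rfl fun j _ => ?_
    rw [toAdd_mul, Pi.add_apply]
    have key : ∀ x y : ZMod 2, tt j ^ (x + y).val = tt j ^ x.val * tt j ^ y.val := by
      intro x y
      rw [← pow_add, ZMod.val_add, ← pow_mod_orderOf, ← pow_mod_orderOf _ (x.val + y.val)]
      have h2 : orderOf (tt j) ∣ 2 := orderOf_dvd_of_pow_eq_one (by rw [pow_two, tt_sq])
      rw [Nat.mod_mod_of_dvd _ h2]
    exact key _ _

lemma chiAb_sec (e : Multiplicative (Fin 5 → ZMod 2)) : chiAb (sec e) = e := by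
  change chiAb (∏ j, tt j ^ (e.toAdd j).val) = e
  rw [map_prod]
  have : ∀ j, chiAb (tt j) = Multiplicative.ofAdd (Pi.single j 1) := by
    intro j
    unfold tt
    rw [chiAb_toAb, ← chi_gen]; rfl
  simp only [map_pow, this]
  apply Multiplicative.toAdd.injective
  rw [toAdd_prod]
  funext k
  rw [Finset.sum_apply, Finset.sum_eq_single k]
  · simp [-ZMod.natCast_val]
    exact ZMod.natCast_zmod_val _
  · intro j _ hj
    simp [hj.symm]
  · simp

lemma sec_ofAdd_single (j : Fin 5) : sec (Multiplicative.ofAdd (Pi.single j 1)) = tt j := by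
  change ∏ k, tt k ^ ((Pi.single j 1 : Fin 5 → ZMod 2) k).val = tt j
  rw [Finset.prod_eq_single j]
  · simp [ZMod.val_one]
  · intro k _ hk
    simp [hk]
  · simp

/-- subgroup generated by the five matrices -/
def C : Subgroup SL2Zi := Subgroup.closure (Set.range gen)

lemma gen_C (j : Fin 5) : gen j ∈ C := Subgroup.subset_closure ⟨j, rfl⟩

lemma C_good {A : SL2Zi} (h : A ∈ C) : ∃ hA : A ∈ K, toAb ⟨A, hA⟩ ∈ sec.range := by
  induction h using Subgroup.closure_induction with
  | mem x hx =>
    obtain ⟨j, rfl⟩ := hx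
    exact ⟨gen_mem j, _, sec_ofAdd_single j⟩
  | one => exact ⟨K.one_mem, by
      change toAb 1 ∈ _
      rw [map_one]; exact one_mem _⟩
  | mul x y _ _ hx hy =>
    obtain ⟨hx, h1⟩ := hx
    obtain ⟨hy, h2⟩ := hy
    refine ⟨mul_mem hx hy, ?_⟩
    have := mul_mem h1 h2
    rwa [← map_mul] at this
  | inv x _ hx =>
    obtain ⟨hx, h1⟩ := hx
    refine ⟨inv_mem hx, ?_⟩
    have := inv_mem h1
    rwa [← map_inv] at this

lemma mul_e (A B : SL2Zi) (i j : Fin 2) :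
    (A * B).1 i j = A.1 i 0 * B.1 0 j + A.1 i 1 * B.1 1 j := by
  simp [Matrix.mul_apply, Fin.sum_univ_two]

lemma T_add (x y : GaussianInt) : T (x + y) = T x * T y := by
  refine Matrix.SpecialLinearGroup.ext _ _ fun a b => ?_
  rw [mul_e]
  fin_cases a <;> fin_cases b <;> simp [T, add_comm]

lemma L_add (x y : GaussianInt) : L (x + y) = L x * L y := by
  refine Matrix.SpecialLinearGroup.ext _ _ fun a b => ?_
  rw [mul_e]
  fin_cases a <;> fin_cases b <;> simp [L, add_comm]

lemma zsmul_mem_of (F : GaussianInt → SL2Zi) (hF : ∀ x y, F (x + y) = F x * F y)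
    (x : GaussianInt) (hx : F x ∈ C) (n : ℤ) : F (n • x) ∈ C := by
  let f : Multiplicative GaussianInt →* SL2Zi := MonoidHom.mk' (fun z => F z.toAdd)
    (fun a b => hF _ _)
  have : F (n • x) = f ((Multiplicative.ofAdd x) ^ n) := by
    rw [← ofAdd_zsmul]; rfl
  rw [this, map_zpow]
  exact zpow_mem hx n

lemma lam_decomp (q : GaussianInt) :
    lam * q = q.re • (⟨1, 1⟩ : GaussianInt) + q.im • (⟨-1, 1⟩ : GaussianInt) := by
  ext <;> simp [lam]
  ring

lemma T_mem (q : GaussianInt) : T (lam * q) ∈ C := by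
  rw [lam_decomp, T_add]
  exact mul_mem (zsmul_mem_of T T_add _ (gen_C 0) _) (zsmul_mem_of T T_add _ (gen_C 1) _)

lemma L_mem (q : GaussianInt) : L (lam * q) ∈ C := by
  rw [lam_decomp, L_add]
  exact mul_mem (zsmul_mem_of L L_add _ (gen_C 2) _) (zsmul_mem_of L L_add _ (gen_C 3) _)

/-- squared absolute value -/
def nn (z : GaussianInt) : ℤ := z.re * z.re + z.im * z.im

lemma nn_mul (z w : GaussianInt) : nn (z * w) = nn z * nn w := by
  simp only [nn, Zsqrtd.re_mul, Zsqrtd.im_mul]; ring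

lemma nn_nonneg (z : GaussianInt) : 0 ≤ nn z := by exact add_nonneg (mul_self_nonneg _) (mul_self_nonneg _)

lemma nn_pos {z : GaussianInt} (h : z ≠ 0) : 0 < nn z := by
  rcases (nn_nonneg z).lt_or_eq with h1 | h1
  · exact h1
  · exfalso; apply h
    unfold nn at h1
    ext
    · simp; nlinarith [mul_self_nonneg z.re, mul_self_nonneg z.im]
    · simp; nlinarith [mul_self_nonneg z.re, mul_self_nonneg z.im]

lemma nn_mod (z : GaussianInt) : nn z % 2 = (z.re + z.im) % 2 := by
  unfold nn
  rcases Int.emod_two_eq_zero_or_one z.re with h | h <;>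
  rcases Int.emod_two_eq_zero_or_one z.im with h' | h' <;>
  simp [Int.add_emod, Int.mul_emod, h, h']

lemma round_exists (p n : ℤ) (hn : 0 < n) : ∃ u : ℤ, 4 * ((p - n * u) * (p - n * u)) ≤ n * n := by
  refine ⟨(2 * p + n) / (2 * n), ?_⟩
  have h1 := Int.emod_add_mul_ediv (2 * p + n) (2 * n)
  have h2 := Int.emod_nonneg (2 * p + n) (show (2 * n) ≠ 0 by omega)
  have h3 := Int.emod_lt_of_pos (2 * p + n) (show 0 < 2 * n by omega)
  set u := (2 * p + n) / (2 * n)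
  set r := (2 * p + n) % (2 * n)
  have : 2 * (p - n * u) = r - n := by linarith
  have h4 : 4 * ((p - n * u) * (p - n * u)) = (r - n) * (r - n) := by rw [← this]; ring
  rw [h4]; nlinarith

lemma div_exists (x y : GaussianInt) (hy : y ≠ 0)
    (hpar : (x.re + x.im) % 2 ≠ (y.re + y.im) % 2) :
    ∃ q, nn (x - lam * q * y) < nn y := by
  have hpos := nn_pos hy
  set m := lam * y with hm
  have hnm : nn m = 2 * nn y := by rw [hm, nn_mul]; rfl
  set p := x * star m with hp
  obtain ⟨u, hu⟩ := round_exists p.re (nn m) (by omega)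
  obtain ⟨v, hv⟩ := round_exists p.im (nn m) (by omega)
  refine ⟨⟨u, v⟩, ?_⟩
  set r := x - lam * ⟨u, v⟩ * y with hr
  have hr' : r = x - ⟨u, v⟩ * m := by rw [hr, hm]; ring
  have e1 : nn (r * star m) = (p.re - nn m * u) * (p.re - nn m * u)
      + (p.im - nn m * v) * (p.im - nn m * v) := by
    rw [hp, hr']
    simp only [nn, Zsqrtd.re_mul, Zsqrtd.im_mul, Zsqrtd.re_sub, Zsqrtd.im_sub, Zsqrtd.re_star,
      Zsqrtd.im_star]
    ring
  have e2 : nn (star m) = nn m := by simp [nn]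
  rw [nn_mul, e2] at e1
  have hle : nn r ≤ nn y := by
    by_contra hcon
    push Not at hcon
    rw [hnm] at e1 hu hv
    nlinarith
  have hne : nn r ≠ nn y := by
    intro h
    have h1 := nn_mod r
    have h2 := nn_mod y
    have h3 := (dvd_iff (x - r)).1 ⟨⟨u, v⟩ * y, by rw [hr]; ring⟩
    simp only [Zsqrtd.re_sub, Zsqrtd.im_sub] at h3
    omega
  omega

lemma D_pow_mem (k : ℕ) : D ^ k ∈ C := pow_mem (gen_C 4) k

lemma diag_case (A : SL2Zi) (hA : A ∈ K) (hc : A.1 1 0 = 0) : A ∈ C := by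
  have hd := det_eq A
  rw [hc, mul_zero, sub_zero] at hd
  -- reduce to a = 1
  have one_case : ∀ B : SL2Zi, B ∈ K → B.1 1 0 = 0 → B.1 0 0 = 1 → B ∈ C := by
    intro B hB hBc hBa
    obtain ⟨b, hb⟩ := ((mem_K B).1 hB).2.1
    have hd' := det_eq B
    rw [hBc, hBa, mul_zero, sub_zero, one_mul] at hd'
    have : B = T (lam * b) := by
      refine Matrix.SpecialLinearGroup.ext _ _ fun i j => ?_
      fin_cases i <;> fin_cases j <;> simp [T, hBc, hBa, hd', hb]
    rw [this]; exact T_mem b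
  have hn : nn (A.1 0 0) * nn (A.1 1 1) = 1 := by rw [← nn_mul, hd]; rfl
  have hn1 : nn (A.1 0 0) = 1 := Int.eq_one_of_mul_eq_one_right (nn_nonneg _) hn
  have step : ∀ k : ℕ, D ^ k * A ∈ C → A ∈ C := by
    intro k hk
    have := mul_mem (inv_mem (D_pow_mem k)) hk
    rwa [inv_mul_cancel_left] at this
  have hDK : D ∈ K := gen_mem 4
  have hD00 : ∀ B : SL2Zi, (D * B).1 0 0 = ⟨0, 1⟩ * B.1 0 0 := by
    intro B; rw [mul_e]; simp [D]
  have hD10 : ∀ B : SL2Zi, (D * B).1 1 0 = ⟨0, -1⟩ * B.1 1 0 := by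
    intro B; rw [mul_e]; simp [D]
  have main : ∀ k : ℕ, (D ^ k * A).1 0 0 = 1 → A ∈ C := by
    intro k hk
    refine step k (one_case _ (mul_mem (pow_mem hDK k) hA) ?_ hk)
    clear hk
    induction k with
    | zero => simpa using hc
    | succ n ih => rw [pow_succ', mul_assoc, hD10, ih, mul_zero]
  have hk00 : ∀ k : ℕ, (D ^ k * A).1 0 0 = (⟨0, 1⟩ : GaussianInt) ^ k * A.1 0 0 := by
    intro k
    induction k with
    | zero => simp
    | succ n ih => rw [pow_succ', mul_assoc, hD00, ih, pow_succ', mul_assoc]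
  simp only [hk00] at main
  generalize A.1 0 0 = a at hn1 main
  obtain ⟨x, y⟩ := a
  simp only [nn] at hn1
  have hx1 : x ≤ 1 := by nlinarith
  have hx2 : -1 ≤ x := by nlinarith
  have hy1 : y ≤ 1 := by nlinarith
  have hy2 : -1 ≤ y := by nlinarith
  interval_cases x <;> interval_cases y <;> first
    | (exfalso; omega)
    | exact main 0 (by decide)
    | exact main 1 (by decide)
    | exact main 2 (by decide)
    | exact main 3 (by decide)

lemma K_le_C (n : ℕ) : ∀ A : SL2Zi, A ∈ K → nn (A.1 0 0) + nn (A.1 1 0) ≤ n → A ∈ C := by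
  induction n with
  | zero =>
    intro A hA h
    apply diag_case A hA
    by_contra hc
    have := nn_pos hc
    have := nn_nonneg (A.1 0 0)
    push_cast at h
    omega
  | succ n ih =>
    intro A hA h
    by_cases hc : A.1 1 0 = 0
    · exact diag_case A hA hc
    have hK := (mem_K A).1 hA
    have ha2 := (dvd_iff _).1 hK.1
    have hc2 := (dvd_iff _).1 hK.2.2.1
    simp only [Zsqrtd.re_sub, Zsqrtd.im_sub, Zsqrtd.re_one, Zsqrtd.im_one] at ha2
    have na := nn_mod (A.1 0 0)
    have nc := nn_mod (A.1 1 0)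
    have hTK : ∀ q, T (lam * q) ∈ K := fun q => (C_good (T_mem q)).1
    have hLK : ∀ q, L (lam * q) ∈ K := fun q => (C_good (L_mem q)).1
    have ha : A.1 0 0 ≠ 0 := by
      intro h0; rw [h0] at ha2; simp at ha2
    rcases lt_or_gt_of_ne (show nn (A.1 0 0) ≠ nn (A.1 1 0) by omega) with hlt | hlt
    · obtain ⟨q, hq⟩ := div_exists (A.1 1 0) (A.1 0 0) ha (by omega)
      have hB : L (lam * -q) * A ∈ C := by
        apply ih _ (mul_mem (hLK _) hA)
        have e1 : (L (lam * -q) * A).1 0 0 = A.1 0 0 := by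
          rw [mul_e]; simp [L]
        have e2 : (L (lam * -q) * A).1 1 0 = A.1 1 0 - lam * q * A.1 0 0 := by
          rw [mul_e]; simp [L]; ring
        rw [e1, e2]; push_cast at h; omega
      have := mul_mem (inv_mem (L_mem (-q))) hB
      rwa [inv_mul_cancel_left] at this
    · obtain ⟨q, hq⟩ := div_exists (A.1 0 0) (A.1 1 0) hc (by omega)
      have hB : T (lam * -q) * A ∈ C := by
        apply ih _ (mul_mem (hTK _) hA)
        have e1 : (T (lam * -q) * A).1 1 0 = A.1 1 0 := by
          rw [mul_e]; simp [T]
        have e2 : (T (lam * -q) * A).1 0 0 = A.1 0 0 - lam * q * A.1 1 0 := by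
          rw [mul_e]; simp [T]; ring
        rw [e1, e2]; push_cast at h; omega
      have := mul_mem (inv_mem (T_mem (-q))) hB
      rwa [inv_mul_cancel_left] at this

lemma sec_surj : Function.Surjective sec := by
  intro x
  obtain ⟨A, rfl⟩ := toAb_surj x
  obtain ⟨hA, h⟩ := C_good (K_le_C (nn (A.1.1 0 0) + nn (A.1.1 1 0)).toNat A.1 A.2
    (Int.self_le_toNat _))
  exact h

end GammaAb

/-- The abelianization of `Γ(1+i) < PSL(2, ℤ[i])` is isomorphic to `(ℤ/2ℤ)⁵`. -/
theorem abelianization_Gamma_one_one :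
    Nonempty (Abelianization ↥(Gamma ⟨1, 1⟩) ≃* Multiplicative (Fin 5 → ZMod 2)) := by
  refine ⟨(MulEquiv.ofBijective GammaAb.sec ⟨?_, GammaAb.sec_surj⟩).symm⟩
  exact Function.LeftInverse.injective GammaAb.chiAb_sec
end

section
/- The images in PSL(2,ℤ[i]) of the matrices [[1, 2+2i],[0, 1]] and [[1, 4],[0, 1]] both lie in the principal congruence subgroup Γ(1+i), and moreover both lie in the commutator subgroup of Γ(1+i). -/
/-- The matrix `[[1, 2+2i], [0, 1]]` as an element of `SL(2, ℤ[i])`. -/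
def u₁ : SL2Zi := ⟨!![1, ⟨2, 2⟩; 0, 1], by simp [Matrix.det_fin_two_of]⟩

/-- The matrix `[[1, 4], [0, 1]]` as an element of `SL(2, ℤ[i])`. -/
def u₂ : SL2Zi := ⟨!![1, 4; 0, 1], by simp [Matrix.det_fin_two_of]⟩

/-- The diagonal matrix `diag(i, -i)`. -/
def diagI : SL2Zi := ⟨!![⟨0, 1⟩, 0; 0, ⟨0, -1⟩], by rw [Matrix.det_fin_two_of]; decide⟩

/-- The upper unipotent matrix with entry `x`. -/
def upper (x : GaussianInt) : SL2Zi := ⟨!![1, x; 0, 1], by simp [Matrix.det_fin_two_of]⟩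

lemma mk_eq_of_dvd (β a b c : GaussianInt) (h : a - b = β * c) :
    Ideal.Quotient.mk (Ideal.span {β}) a = Ideal.Quotient.mk (Ideal.span {β}) b := by
  rw [Ideal.Quotient.eq, Ideal.mem_span_singleton]
  exact ⟨c, h⟩

lemma upper_mem (β c : GaussianInt) : upper (β * c) ∈ (redMap β).ker := by
  rw [MonoidHom.mem_ker]
  have h := mk_eq_of_dvd β (β * c) 0 c (by ring)
  rw [map_zero] at h
  ext i j
  fin_cases i <;> fin_cases j
  · exact map_one (Ideal.Quotient.mk (Ideal.span {β}))
  · exact h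
  · exact map_zero (Ideal.Quotient.mk (Ideal.span {β}))
  · exact map_one (Ideal.Quotient.mk (Ideal.span {β}))

lemma diagI_mem : diagI ∈ (redMap ⟨1, 1⟩).ker := by
  rw [MonoidHom.mem_ker]
  have h1 := mk_eq_of_dvd ⟨1, 1⟩ ⟨0, 1⟩ 1 ⟨0, 1⟩ (by decide)
  have h2 := mk_eq_of_dvd ⟨1, 1⟩ ⟨0, -1⟩ 1 ⟨-1, 0⟩ (by decide)
  rw [map_one] at h1 h2
  ext i j
  fin_cases i <;> fin_cases j
  · exact h1
  · exact map_zero (Ideal.Quotient.mk (Ideal.span {(⟨1, 1⟩ : GaussianInt)}))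
  · exact map_zero (Ideal.Quotient.mk (Ideal.span {(⟨1, 1⟩ : GaussianInt)}))
  · exact h2

open scoped commutatorElement in
/-- Conjugation by `diag(i, -i)` inverts `upper x`, so the commutator is `upper (-2x)`. -/
lemma comm_eq (x : GaussianInt) : ⁅diagI, upper x⁆ = upper (-(2 * x)) := by
  have key : diagI * upper x = upper (-(2 * x)) * upper x * diagI := by
    have e2 : (⟨0, -1⟩ : GaussianInt) = -⟨0, 1⟩ := by decide
    apply Subtype.ext
    change (!![⟨0, 1⟩, 0; 0, ⟨0, -1⟩] : Matrix (Fin 2) (Fin 2) GaussianInt) * !![1, x; 0, 1] =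
      !![1, -(2 * x); 0, 1] * !![1, x; 0, 1] * !![⟨0, 1⟩, 0; 0, ⟨0, -1⟩]
    rw [e2]
    generalize (⟨0, 1⟩ : GaussianInt) = t
    ext1 i j
    fin_cases i <;> fin_cases j <;>
      simp [Matrix.mul_apply, Fin.sum_univ_two]
    ring
  rw [commutatorElement_def, key]
  group

lemma upper_comm_mem (c : GaussianInt) :
    QuotientGroup.mk' PM (upper (-(2 * (⟨1, 1⟩ * c)))) ∈ ⁅Gamma ⟨1, 1⟩, Gamma ⟨1, 1⟩⁆ := by
  rw [← comm_eq, map_commutatorElement]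
  exact Subgroup.commutator_mem_commutator (Subgroup.mem_map_of_mem _ diagI_mem)
    (Subgroup.mem_map_of_mem _ (upper_mem _ _))

/-- The images in `PSL(2, ℤ[i])` of `[[1, 2+2i],[0,1]]` and `[[1, 4],[0,1]]` lie in `Γ(1+i)`,
and moreover both lie in the commutator subgroup of `Γ(1+i)`. -/
theorem parabolics_mem_Gamma_and_commutator :
    QuotientGroup.mk' PM u₁ ∈ Gamma ⟨1, 1⟩ ∧
    QuotientGroup.mk' PM u₂ ∈ Gamma ⟨1, 1⟩ ∧
    QuotientGroup.mk' PM u₁ ∈ ⁅Gamma ⟨1, 1⟩, Gamma ⟨1, 1⟩⁆ ∧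
    QuotientGroup.mk' PM u₂ ∈ ⁅Gamma ⟨1, 1⟩, Gamma ⟨1, 1⟩⁆ := by
  have e1 : u₁ = upper (-(2 * (⟨1, 1⟩ * ⟨-1, 0⟩))) := by
    have : (⟨2, 2⟩ : GaussianInt) = -(2 * (⟨1, 1⟩ * ⟨-1, 0⟩)) := by decide
    rw [← this]; rfl
  have e2 : u₂ = upper (-(2 * (⟨1, 1⟩ * ⟨-1, 1⟩))) := by
    have : (4 : GaussianInt) = -(2 * (⟨1, 1⟩ * ⟨-1, 1⟩)) := by decide
    rw [← this]; rfl
  have h1 := upper_comm_mem ⟨-1, 0⟩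
  have h2 := upper_comm_mem ⟨-1, 1⟩
  rw [← e1] at h1
  rw [← e2] at h2
  have hle : ⁅Gamma ⟨1, 1⟩, Gamma ⟨1, 1⟩⁆ ≤ Gamma ⟨1, 1⟩ :=
    Subgroup.commutator_le.mpr fun a ha b hb =>
      mul_mem (mul_mem (mul_mem ha hb) (inv_mem ha)) (inv_mem hb)
  exact ⟨hle h1, hle h2, h1, h2⟩
end

section
/- The principal congruence subgroup Γ(2+2i) has index 192 in PSL(2,ℤ[i]), and the commutator subgroup of the principal congruence subgroup Γ(1+i) also has index 192 in PSL(2,ℤ[i]). -/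
open Matrix
open scoped commutatorElement

namespace PfAux

abbrev GI := GaussianInt
def pi1 : GI := ⟨1, 1⟩

/-- the matrix with given entries -/
def mk2 (a b c d : GI) (h : a * d - b * c = 1) : SL2Zi :=
  ⟨!![a, b; c, d], by rw [Matrix.det_fin_two_of]; exact h⟩

def Cong (β : GI) (g : SL2Zi) : Prop :=
  β ∣ g 0 0 - 1 ∧ β ∣ g 0 1 ∧ β ∣ g 1 0 ∧ β ∣ g 1 1 - 1

lemma mem_ker (β : GI) (g : SL2Zi) : g ∈ (redMap β).ker ↔ Cong β g := by
  have key : ∀ x y : GI, (Ideal.Quotient.mk (Ideal.span {β}) x = Ideal.Quotient.mk (Ideal.span {β}) y) ↔ β ∣ x - y := by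
    intro x y
    rw [Ideal.Quotient.eq, Ideal.mem_span_singleton]
  rw [MonoidHom.mem_ker, Matrix.SpecialLinearGroup.ext_iff]
  simp only [Fin.forall_fin_two, redMap, Matrix.SpecialLinearGroup.map_apply_coe,
    RingHom.mapMatrix_apply, Matrix.map_apply, Matrix.SpecialLinearGroup.coe_one,
    Matrix.one_apply_eq]
  have h01 : (1 : Matrix (Fin 2) (Fin 2) (GI ⧸ Ideal.span {β})) 0 1 = 0 := by simp
  have h10 : (1 : Matrix (Fin 2) (Fin 2) (GI ⧸ Ideal.span {β})) 1 0 = 0 := by simp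
  rw [h01, h10, ← map_one (Ideal.Quotient.mk (Ideal.span {β})), ← map_zero (Ideal.Quotient.mk (Ideal.span {β}))]
  simp only [key, sub_zero, Cong]
  tauto

lemma mem_PM (x : SL2Zi) : x ∈ PM ↔ x = 1 ∨ x = -1 := by
  constructor
  · intro h
    obtain ⟨k, rfl⟩ := Subgroup.mem_zpowers_iff.mp h
    rcases Int.even_or_odd k with hk | hk
    · left; exact hk.neg_one_zpow
    · right; exact hk.neg_one_zpow
  · rintro (rfl | rfl)
    · exact one_mem _
    · exact Subgroup.mem_zpowers _

lemma mem_Gamma (β : GI) (g : SL2Zi) :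
    ((g : PSL2Zi) ∈ Gamma β) ↔ Cong β g ∨ Cong β (-g) := by
  unfold Gamma
  rw [Subgroup.mem_map]
  constructor
  · rintro ⟨x, hx, hxg⟩
    rw [mem_ker] at hx
    have := QuotientGroup.eq.mp hxg
    rcases (mem_PM _).1 this with h | h
    · left; rwa [← inv_mul_eq_one.mp h]
    · right
      have : g = -x := by
        rw [inv_mul_eq_iff_eq_mul] at h; simp [h]
      simpa [this] using hx
  · rintro (h | h)
    · exact ⟨g, (mem_ker _ _).2 h, rfl⟩
    · refine ⟨-g, (mem_ker _ _).2 h, ?_⟩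
      apply QuotientGroup.eq.mpr
      rw [mem_PM]; right
      rw [inv_mul_eq_iff_eq_mul]; simp

lemma two_eq : (2 : GI) = pi1 * ⟨1, -1⟩ := by
  simp [pi1]; rfl

lemma dichotomy (z : GI) : pi1 ∣ z ∨ pi1 ∣ z - 1 := by
  obtain ⟨a, b⟩ := z
  have h : ∃ k, a + b = 2 * k ∨ a + b = 2 * k + 1 := ⟨(a+b)/2, by omega⟩
  obtain ⟨k, h | h⟩ := h
  · left; refine ⟨⟨k, b - k⟩, ?_⟩
    ext <;> simp [pi1] <;> linarith
  · right; refine ⟨⟨k, b - k⟩, ?_⟩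
    ext <;> simp [pi1] <;> linarith

lemma not_dvd_one : ¬ pi1 ∣ 1 := by
  rintro ⟨⟨a, b⟩, h⟩
  have h1 := congrArg Zsqrtd.re h
  have h2 := congrArg Zsqrtd.im h
  simp [pi1] at h1 h2
  omega

lemma neg_cong {g : SL2Zi} (h : Cong pi1 (-g)) : Cong pi1 g := by
  obtain ⟨h1, h2, h3, h4⟩ := h
  simp at h1 h2 h3 h4
  have t : pi1 ∣ (2 : GI) := ⟨_, two_eq⟩
  refine ⟨?_, h2, h3, ?_⟩
  · have := (dvd_add h1 t).neg_right; ring_nf at this ⊢; exact this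
  · have := (dvd_add h4 t).neg_right; ring_nf at this ⊢; exact this

lemma mem_Gamma1 (g : SL2Zi) : ((g : PSL2Zi) ∈ Gamma ⟨1,1⟩) ↔ Cong pi1 g := by
  rw [mem_Gamma]
  exact ⟨fun h => h.elim id neg_cong, Or.inl⟩

lemma mem_Gamma1' (g : SL2Zi) : ((g : PSL2Zi) ∈ Gamma ⟨1,1⟩) ↔ pi1 ∣ g 0 1 ∧ pi1 ∣ g 1 0 := by
  rw [mem_Gamma1]
  refine ⟨fun h => ⟨h.2.1, h.2.2.1⟩, fun ⟨h1, h2⟩ => ?_⟩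
  have hd := g.det_coe
  rw [Matrix.det_fin_two] at hd
  have hb : pi1 ∣ g 0 1 * g 1 0 := Dvd.dvd.mul_right h1 _
  refine ⟨?_, h1, h2, ?_⟩
  · refine (dichotomy (g 0 0)).resolve_left fun h => not_dvd_one ?_
    rw [← hd]; exact dvd_sub (Dvd.dvd.mul_right h _) hb
  · refine (dichotomy (g 1 1)).resolve_left fun h => not_dvd_one ?_
    rw [← hd]; exact dvd_sub (Dvd.dvd.mul_left h _) hb

instance normal_Gamma (β : GI) : (Gamma β).Normal :=
  Subgroup.Normal.map inferInstance _ (QuotientGroup.mk'_surjective _)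

lemma comm_le : ⁅Gamma ⟨1,1⟩, Gamma ⟨1,1⟩⁆ ≤ Gamma ⟨2,2⟩ := by
  rw [Subgroup.commutator_le]
  intro g hg h hh
  obtain ⟨A, rfl⟩ := QuotientGroup.mk_surjective g
  obtain ⟨B, rfl⟩ := QuotientGroup.mk_surjective h
  have hdA := A.det_coe
  have hdB := B.det_coe
  rw [mem_Gamma1] at hg hh
  rw [Matrix.det_fin_two] at hdA hdB
  obtain ⟨⟨x1, hx1⟩, ⟨x2, hx2⟩, ⟨x3, hx3⟩, ⟨x4, hx4⟩⟩ := hg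
  obtain ⟨⟨y1, hy1⟩, ⟨y2, hy2⟩, ⟨y3, hy3⟩, ⟨y4, hy4⟩⟩ := hh
  have pi0 : pi1 ≠ 0 := by decide
  have e22 : (⟨2,2⟩ : GI) = pi1 * 2 := by decide
  have hx1' : A 0 0 = 1 + pi1 * x1 := by rw [← hx1]; ring
  have hx4' : A 1 1 = 1 + pi1 * x4 := by rw [← hx4]; ring
  have hy1' : B 0 0 = 1 + pi1 * y1 := by rw [← hy1]; ring
  have hy4' : B 1 1 = 1 + pi1 * y4 := by rw [← hy4]; ring
  rw [hx1', hx2, hx3, hx4'] at hdA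
  rw [hy1', hy2, hy3, hy4'] at hdB
  have tx : x1 + x4 = pi1 * (x2 * x3 - x1 * x4) := by
    apply mul_left_cancel₀ pi0; linear_combination hdA
  have ty : y1 + y4 = pi1 * (y2 * y3 - y1 * y4) := by
    apply mul_left_cancel₀ pi0; linear_combination hdB
  have dt : pi1 * ⟨1, -1⟩ = (2 : GI) := two_eq.symm
  have d2 : pi1 * pi1 = 2 * ⟨0, 1⟩ := by decide
  have hz : (⟨1,-1⟩ : GI) = pi1 * ⟨0,-1⟩ := by decide
  -- X - Y form of AB versus BA
  obtain ⟨s, hs⟩ : ∃ s, x1 - x4 = pi1 * s := ⟨(x2 * x3 - x1 * x4) - ⟨1,-1⟩ * x4, by linear_combination tx + x4 * dt⟩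
  obtain ⟨t, ht⟩ : ∃ t, y1 - y4 = pi1 * t := ⟨(y2 * y3 - y1 * y4) - ⟨1,-1⟩ * y4, by linear_combination ty + y4 * dt⟩
  -- reduce to AB ≡ ± BA
  have rd : ∀ P Q : SL2Zi, (∀ i j, (⟨2,2⟩ : GI) ∣ P i j - Q i j) → Cong ⟨2,2⟩ (P * Q⁻¹) := by
    intro P Q h
    have hdQ := Q.det_coe
    rw [Matrix.det_fin_two] at hdQ
    have := h 0 0
    have := h 0 1
    have := h 1 0
    have := h 1 1
    obtain ⟨p, hp⟩ := h 0 0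
    obtain ⟨q, hq⟩ := h 0 1
    obtain ⟨r, hr⟩ := h 1 0
    obtain ⟨u, hu⟩ := h 1 1
    simp only [Cong, Matrix.SpecialLinearGroup.coe_mul, Matrix.SpecialLinearGroup.coe_inv, Matrix.adjugate_fin_two, Matrix.mul_apply, Fin.sum_univ_two]
    simp
    refine ⟨⟨p * Q 1 1 - q * Q 1 0, ?_⟩, ⟨-p * Q 0 1 + q * Q 0 0, ?_⟩, ⟨r * Q 1 1 - u * Q 1 0, ?_⟩, ⟨-r * Q 0 1 + u * Q 0 0, ?_⟩⟩
    · linear_combination Q 1 1 * hp - Q 1 0 * hq + hdQ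
    · linear_combination - Q 0 1 * hp + Q 0 0 * hq
    · linear_combination Q 1 1 * hr - Q 1 0 * hu
    · linear_combination - Q 0 1 * hr + Q 0 0 * hu + hdQ
  have hc : ⁅(A : PSL2Zi), (B : PSL2Zi)⁆ = (((A * B) * (B * A)⁻¹ : SL2Zi) : PSL2Zi) := by
    rw [commutatorElement_def]; 
    simp [mul_assoc]
  rw [hc, mem_Gamma]
  rcases dichotomy (x2 * y3 - y2 * x3) with ⟨l, hl⟩ | ⟨l, hl⟩
  · left
    apply rd
    intro i j
    rw [e22]
    fin_cases i <;> fin_cases j <;> simp [Matrix.mul_apply, Fin.sum_univ_two, hx1', hx2, hx3, hx4', hy1', hy2, hy3, hy4']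
    · exact ⟨⟨0,1⟩ * l, by linear_combination pi1 ^ 2 * hl + pi1 * l * d2⟩
    · exact ⟨⟨0,1⟩ * (s * y2 - t * x2), by linear_combination pi1 ^ 2 * (y2 * hs - x2 * ht) + pi1 * (s * y2 - t * x2) * d2⟩
    · exact ⟨-⟨0,1⟩ * (s * y3 - t * x3), by linear_combination -pi1 ^ 2 * (y3 * hs - x3 * ht) - pi1 * (s * y3 - t * x3) * d2⟩
    · exact ⟨-⟨0,1⟩ * l, by linear_combination -pi1 ^ 2 * hl - pi1 * l * d2⟩
  · right
    rw [← neg_mul]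
    apply rd
    intro i j
    rw [e22, ← dvd_neg]
    have hi : (⟨0,1⟩ : GI) = pi1 - 1 := by decide
    have hi2 : (2 : GI) * pi1 * ⟨0,-1⟩ = 2 * (1 - ⟨0,1⟩) := by decide
    fin_cases i <;> fin_cases j <;> simp [Matrix.mul_apply, Fin.sum_univ_two, hx1', hx2, hx3, hx4', hy1', hy2, hy3, hy4']
    · exact ⟨y1 + x1 + pi1 * (y1 * x1) + pi1 * (y2 * x3) + 1 + ⟨0,1⟩ * l, by
        linear_combination pi1 ^ 2 * hl + (1 + pi1 * l) * d2 + 2 * hi⟩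
    · exact ⟨(1 + pi1 * y1) * x2 + y2 * (1 + pi1 * x4) + ⟨0,1⟩ * (s * y2 - t * x2), by
        linear_combination pi1 ^ 2 * (y2 * hs - x2 * ht) + pi1 * (s * y2 - t * x2) * d2⟩
    · exact ⟨y3 * (1 + pi1 * x1) + (1 + pi1 * y4) * x3 - ⟨0,1⟩ * (s * y3 - t * x3), by
        linear_combination -pi1 ^ 2 * (y3 * hs - x3 * ht) - pi1 * (s * y3 - t * x3) * d2⟩
    · exact ⟨y4 + x4 + pi1 * (y4 * x4) + pi1 * (y3 * x2) + ⟨0,-1⟩ - ⟨0,1⟩ * l, by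
        linear_combination -pi1 ^ 2 * hl - (1 + pi1 * l) * d2 - hi2⟩

end PfAux

namespace PfAux

/-! ### Generators of `Γ(1+i)` -/

lemma sl_ext {g h : SL2Zi} (h00 : g 0 0 = h 0 0) (h01 : g 0 1 = h 0 1) (h10 : g 1 0 = h 1 0)
    (h11 : g 1 1 = h 1 1) : g = h := by
  apply Matrix.SpecialLinearGroup.ext
  intro i j
  fin_cases i <;> fin_cases j
  exacts [h00, h01, h10, h11]

lemma sl_mul (g h : SL2Zi) (i j : Fin 2) : (g * h) i j = g i 0 * h 0 j + g i 1 * h 1 j := by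
  rw [Matrix.SpecialLinearGroup.coe_mul, Matrix.mul_apply, Fin.sum_univ_two]

section
variable (a b c d : GI) (h : a * d - b * c = 1)
@[simp] lemma mk2_00 : (mk2 a b c d h) 0 0 = a := rfl
@[simp] lemma mk2_01 : (mk2 a b c d h) 0 1 = b := rfl
@[simp] lemma mk2_10 : (mk2 a b c d h) 1 0 = c := rfl
@[simp] lemma mk2_11 : (mk2 a b c d h) 1 1 = d := rfl
end

def Tm : Multiplicative GI →* SL2Zi where
  toFun z := mk2 1 (pi1 * z.toAdd) 0 1 (by ring)
  map_one' := by
    apply sl_ext <;> simp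
  map_mul' x y := by
    apply sl_ext <;> simp [sl_mul, mul_add, add_comm]

def Lm : Multiplicative GI →* SL2Zi where
  toFun z := mk2 1 0 (pi1 * z.toAdd) 1 (by ring)
  map_one' := by
    apply sl_ext <;> simp
  map_mul' x y := by
    apply sl_ext <;> simp [sl_mul, mul_add]

section
variable (z : Multiplicative GI)
@[simp] lemma Tm_00 : (Tm z : SL2Zi) 0 0 = 1 := rfl
@[simp] lemma Tm_01 : (Tm z : SL2Zi) 0 1 = pi1 * z.toAdd := rfl
@[simp] lemma Tm_10 : (Tm z : SL2Zi) 1 0 = 0 := rfl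
@[simp] lemma Tm_11 : (Tm z : SL2Zi) 1 1 = 1 := rfl
@[simp] lemma Lm_00 : (Lm z : SL2Zi) 0 0 = 1 := rfl
@[simp] lemma Lm_10 : (Lm z : SL2Zi) 1 0 = pi1 * z.toAdd := rfl
@[simp] lemma Lm_01 : (Lm z : SL2Zi) 0 1 = 0 := rfl
@[simp] lemma Lm_11 : (Lm z : SL2Zi) 1 1 = 1 := rfl
end

def Dm : SL2Zi := mk2 ⟨0,1⟩ 0 0 ⟨0,-1⟩ (by decide)

lemma norm_parity (z : GI) : pi1 ∣ z ↔ z.norm % 2 = 0 := by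
  obtain ⟨a, b⟩ := z
  have hn : (⟨a, b⟩ : GI).norm = a * a + b * b := by simp [Zsqrtd.norm]
  rw [hn]
  have hp : (a * a + b * b) % 2 = (a + b) % 2 := by
    have ha := Int.emod_two_eq_zero_or_one a
    have hb := Int.emod_two_eq_zero_or_one b
    rw [Int.add_emod, Int.mul_emod a a, Int.mul_emod b b, Int.add_emod a b]
    rcases ha with ha | ha <;> rcases hb with hb | hb <;> simp [ha, hb]
  rw [hp]
  constructor
  · rintro ⟨⟨c, d⟩, h⟩
    have h1 := congrArg Zsqrtd.re h
    have h2 := congrArg Zsqrtd.im h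
    simp [pi1] at h1 h2
    omega
  · intro h
    refine ⟨⟨(a+b)/2, b - (a+b)/2⟩, ?_⟩
    ext
    · simp [pi1]; omega
    · simp [pi1]

lemma int_round (w N : ℤ) (hN : 0 < N) : ∃ q : ℤ, 4 * ((w - q * N) * (w - q * N)) ≤ N * N := by
  refine ⟨(2 * w + N) / (2 * N), ?_⟩
  have h1 := Int.emod_add_mul_ediv (2 * w + N) (2 * N)
  have h2 := Int.emod_nonneg (2 * w + N) (show 2 * N ≠ 0 by omega)
  have h3 := Int.emod_lt_of_pos (2 * w + N) (show 0 < 2 * N by omega)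
  set q := (2 * w + N) / (2 * N)
  set r := (2 * w + N) % (2 * N)
  have : 2 * (w - q * N) = r - N := by linear_combination h1.symm
  nlinarith

lemma round_half (a y : GI) (hy : y ≠ 0) : ∃ q : GI, 2 * (a - y * q).norm ≤ y.norm := by
  have hN : 0 < y.norm := GaussianInt.norm_pos.2 hy
  obtain ⟨q1, h1⟩ := int_round (a * star y).re y.norm hN
  obtain ⟨q2, h2⟩ := int_round (a * star y).im y.norm hN
  refine ⟨⟨q1, q2⟩, ?_⟩
  have key : (a - y * ⟨q1, q2⟩).norm * y.norm =
      ((a * star y).re - q1 * y.norm) * ((a * star y).re - q1 * y.norm)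
       + ((a * star y).im - q2 * y.norm) * ((a * star y).im - q2 * y.norm) := by
    obtain ⟨a1, a2⟩ := a
    obtain ⟨y1, y2⟩ := y
    simp [Zsqrtd.norm]
    ring
  nlinarith

/-- Euclidean step with a strict decrease coming from parity. -/
lemma euclid_step (a c : GI) (hc : c ≠ 0) (hpar : a.norm % 2 ≠ c.norm % 2) :
    ∃ q : GI, (a - pi1 * q * c).norm < c.norm ∧ (a - pi1 * q * c).norm % 2 = a.norm % 2 := by
  have pi0 : pi1 ≠ 0 := by decide
  obtain ⟨q, hq⟩ := round_half a (pi1 * c) (mul_ne_zero pi0 hc)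
  have e : a - pi1 * c * q = a - pi1 * q * c := by ring
  rw [e, Zsqrtd.norm_mul, show pi1.norm = 2 from by decide] at hq
  have hp : (a - pi1 * q * c).norm % 2 = a.norm % 2 := by
    have : pi1 ∣ (a - pi1 * q * c) ↔ pi1 ∣ a := by
      apply dvd_sub_left
      exact ⟨q * c, by ring⟩
    rw [norm_parity, norm_parity] at this
    omega
  exact ⟨q, by omega, hp⟩

lemma gen_aux (H : Subgroup PSL2Zi) (hT : ∀ z, ((Tm z : SL2Zi) : PSL2Zi) ∈ H)
    (hL : ∀ z, ((Lm z : SL2Zi) : PSL2Zi) ∈ H) (hD : (Dm : PSL2Zi) ∈ H) (n : ℕ) :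
    ∀ g : SL2Zi, (g 0 0).norm + (g 1 0).norm ≤ n → pi1 ∣ g 0 1 → pi1 ∣ g 1 0 →
      (g : PSL2Zi) ∈ H := by
  induction n using Nat.strong_induction_on with
  | _ n ih =>
  intro g hn hb hc
  have hG := (mem_Gamma1 g).1 ((mem_Gamma1' g).2 ⟨hb, hc⟩)
  have hd := g.det_coe
  rw [Matrix.det_fin_two] at hd
  have na := GaussianInt.norm_nonneg (g 0 0)
  have nc := GaussianInt.norm_nonneg (g 1 0)
  have hce := (norm_parity _).1 hc
  have hao : (g 0 0).norm % 2 = 1 := by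
    have : ¬ pi1 ∣ g 0 0 := fun h => not_dvd_one (by simpa using dvd_sub h hG.1)
    rw [norm_parity] at this
    omega
  by_cases hc0 : g 1 0 = 0
  · rw [hc0, mul_zero, sub_zero] at hd
    obtain ⟨b', hb'⟩ := hb
    have hn1 : (g 0 0).norm = 1 := by
      have := congrArg Zsqrtd.norm hd
      rw [Zsqrtd.norm_mul, Zsqrtd.norm_one] at this
      exact Int.eq_one_of_mul_eq_one_right na this
    have hg : g = mk2 (g 0 0) 0 0 (g 1 1) (by rw [hd]; ring) * Tm (Multiplicative.ofAdd (b' * g 1 1)) := by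
      apply sl_ext <;> simp only [sl_mul, mk2_00, mk2_01, mk2_10, mk2_11, Tm_00, Tm_01, Tm_10, Tm_11, hc0, toAdd_ofAdd, mul_one, mul_zero, zero_mul, add_zero, zero_add]
      · rw [hb']; linear_combination - pi1 * b' * hd
    rw [hg, QuotientGroup.mk_mul]
    refine mul_mem ?_ (hT _)
    have hone : ∀ x : SL2Zi, x = 1 ∨ x = -1 → (x : PSL2Zi) ∈ H := by
      intro x hx
      have : (x : PSL2Zi) = 1 := (QuotientGroup.eq_one_iff _).2 ((mem_PM x).2 hx)
      rw [this]; exact one_mem _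
    have hDD : ∀ x : SL2Zi, x * Dm⁻¹ = 1 ∨ x * Dm⁻¹ = -1 → (x : PSL2Zi) ∈ H := by
      intro x hx
      have := mul_mem (hone _ hx) hD
      rwa [← QuotientGroup.mk_mul, inv_mul_cancel_right] at this
    generalize g 0 0 = a at *
    generalize g 1 1 = d at *
    have hda : d = star a := by
      have : a * star a = 1 := by rw [← Zsqrtd.norm_eq_mul_conj, hn1]; rfl
      have a0 : a ≠ 0 := by rintro rfl; simp at hd
      exact mul_left_cancel₀ a0 (hd.trans this.symm)
    have cases4 : a = 1 ∨ a = -1 ∨ a = ⟨0,1⟩ ∨ a = ⟨0,-1⟩ := by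
      obtain ⟨u, v⟩ := a
      simp [Zsqrtd.norm] at hn1
      have hu : u ≤ 1 := by nlinarith
      have hu' : -1 ≤ u := by nlinarith
      have hv : v ≤ 1 := by nlinarith
      have hv' : -1 ≤ v := by nlinarith
      simp [Zsqrtd.ext_iff]
      interval_cases u <;> interval_cases v <;> simp_all
    subst hda
    rcases cases4 with rfl | rfl | rfl | rfl
    · apply hone; left
      apply sl_ext <;> simp only [mk2_00, mk2_01, mk2_10, mk2_11] <;> decide
    · apply hone; right
      apply sl_ext <;> simp only [mk2_00, mk2_01, mk2_10, mk2_11] <;> decide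
    · apply hDD; left
      rw [mul_inv_eq_one]
      apply sl_ext <;> simp only [mk2_00, mk2_01, mk2_10, mk2_11] <;> decide
    · apply hDD; right
      rw [mul_inv_eq_iff_eq_mul]
      apply sl_ext <;> simp only [mk2_00, mk2_01, mk2_10, mk2_11] <;> decide
  · by_cases hlt : (g 1 0).norm < (g 0 0).norm
    · obtain ⟨q, hq, hq2⟩ := euclid_step (g 0 0) (g 1 0) hc0 (by omega)
      set g' : SL2Zi := Tm (Multiplicative.ofAdd (-q)) * g with hg'
      have e00 : g' 0 0 = g 0 0 - pi1 * q * g 1 0 := by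
        rw [hg', sl_mul]; simp [-ofAdd_neg]; ring
      have e01 : g' 0 1 = g 0 1 - pi1 * (q * g 1 1) := by
        rw [hg', sl_mul]; simp [-ofAdd_neg]; ring
      have e10 : g' 1 0 = g 1 0 := by
        rw [hg', sl_mul]; simp [-ofAdd_neg]
      have hm := ih ((g' 0 0).norm + (g' 1 0).norm).toNat (by rw [e00, e10]; omega) g' (by omega)
        (by rw [e01]; exact dvd_sub hb (dvd_mul_right _ _)) (by rwa [e10])
      have := mul_mem (hT (Multiplicative.ofAdd q)) hm
      rwa [← QuotientGroup.mk_mul, hg', ← mul_assoc, ← map_mul, ← ofAdd_add, add_neg_cancel, ofAdd_zero,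
        map_one, one_mul] at this
    · have ha0 : g 0 0 ≠ 0 := by rintro h; rw [h] at hao; simp at hao
      obtain ⟨q, hq, hq2⟩ := euclid_step (g 1 0) (g 0 0) ha0 (by omega)
      set g' : SL2Zi := Lm (Multiplicative.ofAdd (-q)) * g with hg'
      have e00 : g' 0 0 = g 0 0 := by
        rw [hg', sl_mul]; simp [-ofAdd_neg]
      have e01 : g' 0 1 = g 0 1 := by
        rw [hg', sl_mul]; simp [-ofAdd_neg]
      have e10 : g' 1 0 = g 1 0 - pi1 * q * g 0 0 := by
        rw [hg', sl_mul]; simp [-ofAdd_neg]; ring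
      have hm := ih ((g' 0 0).norm + (g' 1 0).norm).toNat (by rw [e00, e10]; omega) g' (by omega)
        (by rwa [e01]) (by rw [e10, mul_assoc]; exact dvd_sub hc (dvd_mul_right _ _))
      have := mul_mem (hL (Multiplicative.ofAdd q)) hm
      rwa [← QuotientGroup.mk_mul, hg', ← mul_assoc, ← map_mul, ← ofAdd_add, add_neg_cancel, ofAdd_zero,
        map_one, one_mul] at this

lemma gen (H : Subgroup PSL2Zi) (hT : ∀ z, ((Tm z : SL2Zi) : PSL2Zi) ∈ H)
    (hL : ∀ z, ((Lm z : SL2Zi) : PSL2Zi) ∈ H) (hD : (Dm : PSL2Zi) ∈ H) :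
    Gamma ⟨1,1⟩ ≤ H := by
  intro x hx
  obtain ⟨g, rfl⟩ := QuotientGroup.mk_surjective x
  rw [mem_Gamma1'] at hx
  exact gen_aux H hT hL hD ((g 0 0).norm + (g 1 0).norm).toNat g (Int.self_le_toNat _) hx.1 hx.2

lemma hom_decomp {K : Type*} [Group K] (f : Multiplicative GI →* K) (z : Multiplicative GI) :
    f z = f (Multiplicative.ofAdd 1) ^ z.toAdd.re * f (Multiplicative.ofAdd ⟨0,1⟩) ^ z.toAdd.im := by
  rw [← map_zpow f, ← map_zpow f, ← map_mul f]
  congr 1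
  rw [← ofAdd_zsmul, ← ofAdd_zsmul, ← ofAdd_add]
  apply Multiplicative.toAdd.injective
  rw [toAdd_ofAdd]
  ext <;> simp

lemma card_involutions {Q : Type*} [CommGroup Q] (t : Fin 5 → Q) (ht : ∀ i, t i ^ 2 = 1)
    (hgen : ∀ K : Subgroup Q, (∀ i, t i ∈ K) → K = ⊤) : Finite Q ∧ Nat.card Q ≤ 32 := by
  let F : Multiplicative (Fin 5 → ZMod 2) →* Q :=
    { toFun := fun e => ∏ i, t i ^ (e.toAdd i).val
      map_one' := by simp
      map_mul' := by
        intro x y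
        rw [← Finset.prod_mul_distrib]
        refine Finset.prod_congr rfl fun i _ => ?_
        rw [toAdd_mul, Pi.add_apply, ZMod.val_add, ← pow_add]
        exact (pow_eq_pow_mod _ (ht i)).symm }
  have hs : Function.Surjective F := by
    rw [← MonoidHom.range_eq_top]
    apply hgen
    intro i
    refine ⟨Multiplicative.ofAdd (Pi.single i 1), ?_⟩
    change ∏ j, t j ^ ((Pi.single i 1 : Fin 5 → ZMod 2) j).val = t i
    rw [Finset.prod_eq_single i]
    · simp [ZMod.val_one]
    · intro b _ hb; simp [hb]
    · simp
  have : Finite (Multiplicative (Fin 5 → ZMod 2)) := inferInstanceAs (Finite (Fin 5 → ZMod 2))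
  refine ⟨Finite.of_surjective F hs, (Nat.card_le_card_of_surjective F hs).trans ?_⟩
  have : Nat.card (Multiplicative (Fin 5 → ZMod 2)) = Nat.card (Fin 5 → ZMod 2) := rfl
  rw [this]; simp

abbrev G1 : Subgroup PSL2Zi := Gamma ⟨1,1⟩

lemma Tm_mem (z) : ((Tm z : SL2Zi) : PSL2Zi) ∈ G1 := by
  rw [mem_Gamma1']; simp

lemma Lm_mem (z) : ((Lm z : SL2Zi) : PSL2Zi) ∈ G1 := by
  rw [mem_Gamma1']; simp

lemma Dm_mem : ((Dm : SL2Zi) : PSL2Zi) ∈ G1 := by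
  rw [mem_Gamma1']; simp [Dm, mk2]

def TQ : Multiplicative GI →* Abelianization G1 :=
  Abelianization.of.comp (((QuotientGroup.mk' PM).comp Tm).codRestrict G1 Tm_mem)

def LQ : Multiplicative GI →* Abelianization G1 :=
  Abelianization.of.comp (((QuotientGroup.mk' PM).comp Lm).codRestrict G1 Lm_mem)

def DQ : Abelianization G1 := Abelianization.of ⟨_, Dm_mem⟩

lemma DQ_sq : DQ ^ 2 = 1 := by
  have : (⟨_, Dm_mem⟩ : G1) ^ 2 = 1 := by
    apply Subtype.ext
    change ((Dm ^ 2 : SL2Zi) : PSL2Zi) = 1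
    rw [QuotientGroup.eq_one_iff, mem_PM]
    right
    rw [pow_two]; apply sl_ext <;> decide
  rw [DQ, ← map_pow, this, map_one]

lemma TQ_sq (z) : TQ z ^ 2 = 1 := by
  have h : Dm * Tm z = Tm z⁻¹ * Dm := by
    apply sl_ext <;> simp [-map_inv, Dm, sl_mul]
    rw [show (⟨0,-1⟩ : GI) = -⟨0,1⟩ by decide]; ring
  have h2 : DQ * TQ z = TQ z⁻¹ * DQ := by
    change Abelianization.of (_ * _ : G1) = Abelianization.of (_ * _ : G1)
    congr 1
    apply Subtype.ext
    exact congrArg (QuotientGroup.mk' PM) h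
  rw [mul_comm DQ, mul_left_inj, map_inv, eq_inv_iff_mul_eq_one] at h2
  rw [pow_two, h2]

lemma LQ_sq (z) : LQ z ^ 2 = 1 := by
  have h : Dm * Lm z = Lm z⁻¹ * Dm := by
    apply sl_ext <;> simp [-map_inv, Dm, sl_mul]
    rw [show (⟨0,-1⟩ : GI) = -⟨0,1⟩ by decide]; ring
  have h2 : DQ * LQ z = LQ z⁻¹ * DQ := by
    change Abelianization.of (_ * _ : G1) = Abelianization.of (_ * _ : G1)
    congr 1
    apply Subtype.ext
    exact congrArg (QuotientGroup.mk' PM) h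
  rw [mul_comm DQ, mul_left_inj, map_inv, eq_inv_iff_mul_eq_one] at h2
  rw [pow_two, h2]

lemma ab_bound : Finite (Abelianization G1) ∧ Nat.card (Abelianization G1) ≤ 32 := by
  apply card_involutions ![TQ (Multiplicative.ofAdd 1), TQ (Multiplicative.ofAdd ⟨0,1⟩),
    LQ (Multiplicative.ofAdd 1), LQ (Multiplicative.ofAdd ⟨0,1⟩), DQ]
  · intro i
    fin_cases i
    · exact TQ_sq _
    · exact TQ_sq _
    · exact LQ_sq _
    · exact LQ_sq _
    · exact DQ_sq
  · intro K hK
    have hTK : ∀ z, TQ z ∈ K := fun z => by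
      rw [hom_decomp TQ]
      exact mul_mem (zpow_mem (hK 0) _) (zpow_mem (hK 1) _)
    have hLK : ∀ z, LQ z ∈ K := fun z => by
      rw [hom_decomp LQ]
      exact mul_mem (zpow_mem (hK 2) _) (zpow_mem (hK 3) _)
    have := gen ((K.comap Abelianization.of).map G1.subtype)
      (fun z => ⟨⟨_, Tm_mem z⟩, hTK z, rfl⟩) (fun z => ⟨⟨_, Lm_mem z⟩, hLK z, rfl⟩)
      ⟨⟨_, Dm_mem⟩, hK 4, rfl⟩
    rw [eq_top_iff]
    intro q _
    obtain ⟨x, rfl⟩ := QuotientGroup.mk_surjective q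
    obtain ⟨y, hy, hyx⟩ := this x.2
    have : y = x := Subtype.ext hyx
    subst this
    exact hy

lemma relIndex_comm : (⁅G1, G1⁆).relIndex G1 = Nat.card (Abelianization G1) := by
  rw [← Subgroup.map_subtype_commutator, Subgroup.relIndex, Subgroup.subgroupOf,
    Subgroup.comap_map_eq_self_of_injective G1.subtype_injective]
  rfl

end PfAux

namespace PfAux

/-! ### Index of `Γ(1+i)` -/

def redTwo : GI →+* ZMod 2 := Zsqrtd.lift ⟨1, by decide⟩

lemma redTwo_apply (z : GI) : redTwo z = ((z.re + z.im : ℤ) : ZMod 2) := by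
  simp [redTwo]

lemma redTwo_eq_zero (z : GI) : redTwo z = 0 ↔ pi1 ∣ z := by
  constructor
  · intro h
    refine (dichotomy z).resolve_right ?_
    rintro ⟨w, hw⟩
    have : z = 1 + pi1 * w := by rw [← hw]; ring
    rw [this, map_add, map_mul, show redTwo pi1 = 0 by rw [redTwo_apply]; rfl, map_one] at h
    simp at h
  · rintro ⟨w, rfl⟩
    rw [map_mul, show redTwo pi1 = 0 by rw [redTwo_apply]; rfl, zero_mul]

def redSL : SL2Zi →* Matrix.SpecialLinearGroup (Fin 2) (ZMod 2) :=
  Matrix.SpecialLinearGroup.map redTwo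

lemma redSL_surj : Function.Surjective redSL := by
  intro x
  have hx := x.det_coe
  rw [Matrix.det_fin_two] at hx
  have lift : ∀ a b c d : ZMod 2, a * d - b * c = 1 →
      ((a.val : ℤ) * d.val - b.val * c.val) * ((a.val : ℤ) * d.val - b.val * c.val) = 1
      ∧ ((((a.val : ℤ) * d.val - b.val * c.val) * a.val : ℤ) : ZMod 2) = a
      ∧ ((((a.val : ℤ) * d.val - b.val * c.val) * c.val : ℤ) : ZMod 2) = c
      ∧ (((b.val : ℤ)) : ZMod 2) = b ∧ (((d.val : ℤ)) : ZMod 2) = d := by decide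
  obtain ⟨h1, h2, h3, h4, h5⟩ := lift _ _ _ _ hx
  set e : ℤ := ((x 0 0).val : ℤ) * (x 1 1).val - (x 0 1).val * (x 1 0).val with he
  refine ⟨mk2 ((e * (x 0 0).val : ℤ) : GI) (((x 0 1).val : ℤ) : GI) ((e * (x 1 0).val : ℤ) : GI)
    (((x 1 1).val : ℤ) : GI) ?_, ?_⟩
  · have h6 : (e * (x 0 0).val) * (x 1 1).val - (x 0 1).val * (e * (x 1 0).val) = 1 := by
      linear_combination h1 - e * he
    exact_mod_cast congrArg (Int.cast : ℤ → GI) h6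
  · have key : ∀ (g : SL2Zi) i j, (redSL g) i j = redTwo (g i j) := fun _ _ _ => rfl
    apply Matrix.SpecialLinearGroup.ext
    intro i j
    rw [key]
    fin_cases i <;> fin_cases j
    · change redTwo ((e * (x 0 0).val : ℤ) : GI) = x 0 0
      rw [map_intCast, h2]
    · change redTwo (((x 0 1).val : ℤ) : GI) = x 0 1
      rw [map_intCast, h4]
    · change redTwo ((e * (x 1 0).val : ℤ) : GI) = x 1 0
      rw [map_intCast, h3]
    · change redTwo (((x 1 1).val : ℤ) : GI) = x 1 1
      rw [map_intCast, h5]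

lemma card_SL2F2 : Nat.card (Matrix.SpecialLinearGroup (Fin 2) (ZMod 2)) = 6 := by
  let f : Matrix.SpecialLinearGroup (Fin 2) (ZMod 2) ≃
      {p : (ZMod 2 × ZMod 2) × (ZMod 2 × ZMod 2) // p.1.1 * p.2.2 - p.1.2 * p.2.1 = 1} :=
    { toFun := fun x => ⟨((x 0 0, x 0 1), (x 1 0, x 1 1)), by
        have := x.det_coe; rwa [Matrix.det_fin_two] at this⟩
      invFun := fun p => ⟨!![p.1.1.1, p.1.1.2; p.1.2.1, p.1.2.2], by
        rw [Matrix.det_fin_two_of]; exact p.2⟩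
      left_inv := fun x => by
        apply Matrix.SpecialLinearGroup.ext
        intro i j; fin_cases i <;> fin_cases j <;> rfl
      right_inv := fun p => rfl }
  rw [Nat.card_congr f, Nat.card_eq_fintype_card]
  decide

lemma index_G1 : G1.index = 6 := by
  have h : G1.comap (QuotientGroup.mk' PM) = redSL.ker := by
    ext g
    rw [Subgroup.mem_comap, QuotientGroup.mk'_apply, mem_Gamma1, MonoidHom.mem_ker]
    constructor
    · rintro ⟨h1, h2, h3, h4⟩
      rw [← redTwo_eq_zero] at h1 h2 h3 h4
      rw [map_sub, map_one, sub_eq_zero] at h1 h4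
      apply Matrix.SpecialLinearGroup.ext
      intro i j
      fin_cases i <;> fin_cases j
      exacts [h1, h2, h3, h4]
    · intro h
      have key : ∀ i j, redTwo (g i j) = (1 : Matrix.SpecialLinearGroup (Fin 2) (ZMod 2)) i j := by
        intro i j; rw [← h]; rfl
      refine ⟨?_, ?_, ?_, ?_⟩ <;> rw [← redTwo_eq_zero]
      · rw [map_sub, key, map_one]; rfl
      · rw [key]; rfl
      · rw [key]; rfl
      · rw [map_sub, key, map_one]; rfl
  rw [← Subgroup.index_comap_of_surjective G1 (QuotientGroup.mk'_surjective PM), h,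
    Subgroup.index_ker, MonoidHom.range_eq_top.2 redSL_surj, Subgroup.card_top, card_SL2F2]

/-! ### Lower bound for `Γ(2+2i)` -/

lemma dvd22 (z : GI) : (⟨2,2⟩ : GI) ∣ z → (z.re + z.im) % 4 = 0 ∧ (z.im - z.re) % 4 = 0 := by
  rintro ⟨⟨a, b⟩, rfl⟩
  simp
  omega

abbrev Idx := (Fin 2 × Fin 2) × (Fin 2 × Fin 2) × Fin 2

def gx (p : Idx) : GI := ⟨(p.1.1.val : ℤ), (p.1.2.val : ℤ)⟩
def gy (p : Idx) : GI := ⟨(p.2.1.1.val : ℤ), (p.2.1.2.val : ℤ)⟩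
def gu (p : Idx) : GI := if p.2.2 = 0 then 1 else ⟨0, 1⟩
def gv (p : Idx) : GI := if p.2.2 = 0 then 1 else ⟨0, -1⟩

lemma guv (p : Idx) : gu p * gv p = 1 := by
  unfold gu gv; split_ifs <;> decide

def ea (p : Idx) : GI := (1 + pi1 * pi1 * gx p * gy p) * gu p
def eb (p : Idx) : GI := pi1 * gx p * gv p
def ec (p : Idx) : GI := pi1 * gy p * gu p

def rep (p : Idx) : SL2Zi := mk2 (ea p) (eb p) (ec p) (gv p) (by
  unfold ea eb ec; linear_combination guv p)

/-- numerical test -/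
def test (z : GI) : Bool := (z.re + z.im) % 4 == 0 && (z.im - z.re) % 4 == 0

lemma test_of_dvd {z : GI} (h : (⟨2,2⟩ : GI) ∣ z) : test z = true := by
  have := dvd22 z h
  simp [test, this.1, this.2]

set_option maxRecDepth 100000 in
lemma test_all : ∀ p q : Idx, (
    (test (ea p - ea q) && test (eb p - eb q) && test (ec p - ec q) && test (gv p - gv q)) ||
    (test (ea p + ea q) && test (eb p + eb q) && test (ec p + ec q) && test (gv p + gv q))) = true
    → p = q := by
  decide +kernel

lemma cong_eq (P Q : SL2Zi) (h : Cong ⟨2,2⟩ (P⁻¹ * Q)) (i j : Fin 2) :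
    (⟨2,2⟩ : GI) ∣ P i j - Q i j := by
  have hQ : Q = P * (P⁻¹ * Q) := by group
  obtain ⟨⟨a, ha⟩, ⟨b, hb⟩, ⟨c, hc⟩, ⟨d, hd⟩⟩ := h
  rw [hQ]
  generalize P⁻¹ * Q = M at *
  rw [sl_mul]
  have h0 : ∀ j, ∃ k l, M 0 j = (1 : SL2Zi) 0 j + ⟨2,2⟩ * k ∧ M 1 j = (1 : SL2Zi) 1 j + ⟨2,2⟩ * l := by
    intro j
    fin_cases j
    · exact ⟨a, c, by simp; linear_combination ha, by simp; linear_combination hc⟩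
    · exact ⟨b, d, by simp; linear_combination hb, by simp; linear_combination hd⟩
  obtain ⟨k, l, h1, h2⟩ := h0 j
  rw [h1, h2]
  have : P i j = P i 0 * (1 : SL2Zi) 0 j + P i 1 * (1 : SL2Zi) 1 j := by
    rw [← sl_mul, mul_one]
  exact ⟨-(P i 0 * k + P i 1 * l), by linear_combination this⟩

lemma rep_inj (p q : Idx) (h : ((rep p)⁻¹ * rep q : PSL2Zi) ∈ Gamma ⟨2,2⟩) : p = q := by
  rw [← QuotientGroup.mk_mul, mem_Gamma] at h
  apply test_all
  rcases h with h | h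
  · have := cong_eq _ _ h
    have h1 := test_of_dvd (this 0 0)
    have h2 := test_of_dvd (this 0 1)
    have h3 := test_of_dvd (this 1 0)
    have h4 := test_of_dvd (this 1 1)
    simp only [rep, mk2_00, mk2_01, mk2_10, mk2_11] at h1 h2 h3 h4
    simp [h1, h2, h3, h4]
  · rw [← mul_neg] at h
    have := cong_eq _ _ h
    have hn : ∀ i j, (-rep q) i j = - (rep q i j) := fun i j => by simp
    simp only [hn, sub_neg_eq_add] at this
    have h1 := test_of_dvd (this 0 0)
    have h2 := test_of_dvd (this 0 1)
    have h3 := test_of_dvd (this 1 0)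
    have h4 := test_of_dvd (this 1 1)
    simp only [rep, mk2_00, mk2_01, mk2_10, mk2_11] at h1 h2 h3 h4
    simp [h1, h2, h3, h4]

lemma rep_mem (p : Idx) : ((rep p : SL2Zi) : PSL2Zi) ∈ G1 := by
  rw [mem_Gamma1']
  simp only [rep, mk2_01, mk2_10, eb, ec, mul_assoc]
  exact ⟨dvd_mul_right _ _, dvd_mul_right _ _⟩

lemma relIndex_lower (hfin : (Gamma ⟨2,2⟩).relIndex G1 ≠ 0) :
    32 ≤ (Gamma ⟨2,2⟩).relIndex G1 := by
  have hf : Finite (G1 ⧸ (Gamma ⟨2,2⟩).subgroupOf G1) := Nat.finite_of_card_ne_zero hfin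
  let f : Idx → G1 ⧸ (Gamma ⟨2,2⟩).subgroupOf G1 := fun p => ((⟨_, rep_mem p⟩ : G1) : _)
  have hi : Function.Injective f := by
    intro p q h
    have := QuotientGroup.eq.mp h
    rw [Subgroup.mem_subgroupOf] at this
    exact rep_inj p q this
  have := Nat.card_le_card_of_injective f hi
  rw [show Nat.card Idx = 32 by simp [Nat.card_eq_fintype_card]] at this
  exact this

lemma G2_le_G1 : Gamma ⟨2,2⟩ ≤ G1 := by
  intro x hx
  obtain ⟨g, rfl⟩ := QuotientGroup.mk_surjective x
  rw [mem_Gamma] at hx ⊢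
  have d : (⟨1,1⟩ : GI) ∣ ⟨2,2⟩ := ⟨2, by decide⟩
  have mono : ∀ g, Cong ⟨2,2⟩ g → Cong ⟨1,1⟩ g := fun g ⟨h1, h2, h3, h4⟩ =>
    ⟨d.trans h1, d.trans h2, d.trans h3, d.trans h4⟩
  exact hx.imp (mono _) (mono _)

end PfAux

open PfAux

/-- `Γ(2+2i)` has index `192` in `PSL(2, ℤ[i])`, and the commutator subgroup of `Γ(1+i)`
also has index `192` in `PSL(2, ℤ[i])`. -/
theorem index_Gamma_two_two_and_commutator :
    (Gamma ⟨2, 2⟩).index = 192 ∧ (⁅Gamma ⟨1, 1⟩, Gamma ⟨1, 1⟩⁆ : Subgroup PSL2Zi).index = 192 := by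
  have hle := comm_le
  obtain ⟨hfin, hub⟩ := ab_bound
  have hpos : 0 < Nat.card (Abelianization G1) := Nat.card_pos
  have hrC := relIndex_comm
  have hdvd : (Gamma ⟨2, 2⟩).relIndex G1 ∣ (⁅G1, G1⁆).relIndex G1 :=
    Subgroup.relIndex_dvd_of_le_left G1 hle
  have hne : (Gamma ⟨2, 2⟩).relIndex G1 ≠ 0 := by
    intro h
    rw [h, zero_dvd_iff] at hdvd
    omega
  have hlow := relIndex_lower hne
  have hle2 := Nat.le_of_dvd (by omega) hdvd
  have i2 := Subgroup.relIndex_mul_index G2_le_G1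
  have iC : (⁅G1, G1⁆).relIndex G1 * G1.index = (⁅G1, G1⁆).index :=
    Subgroup.relIndex_mul_index (hle.trans G2_le_G1)
  rw [index_G1] at i2 iC
  exact ⟨by omega, by change (⁅G1, G1⁆).index = 192; omega⟩
end

section
/- Let T₀ = I, T₁ = [[0,1],[−1,0]], T₂ = [[1,−1],[0,1]], T₃ = [[1,0],[−1,1]], T₄ = [[1,1],[−1,0]], T₅ = [[0,−1],[1,1]], viewed as elements of SL(2,ℤ[i]). Then every element of PSL(2,ℤ[i]) can be written as γ·(image of T_i) for a unique index i ∈ {0,1,2,3,4,5} and some γ in the principal congruence subgroup Γ(1+i); that is, the images of T₀,…,T₅ form a complete system of right coset representatives for Γ(1+i) in PSL(2,ℤ[i]). -/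
/-- The six matrices `T₀ = I`, `T₁ = [[0,1],[−1,0]]`, `T₂ = [[1,−1],[0,1]]`, `T₃ = [[1,0],[−1,1]]`,
`T₄ = [[1,1],[−1,0]]`, `T₅ = [[0,−1],[1,1]]` as elements of `SL(2, ℤ[i])`. -/
def T : Fin 6 → SL2Zi
  | 0 => 1
  | 1 => ⟨!![0, 1; -1, 0], by simp [Matrix.det_fin_two_of]⟩
  | 2 => ⟨!![1, -1; 0, 1], by simp [Matrix.det_fin_two_of]⟩
  | 3 => ⟨!![1, 0; -1, 1], by simp [Matrix.det_fin_two_of]⟩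
  | 4 => ⟨!![1, 1; -1, 0], by simp [Matrix.det_fin_two_of]⟩
  | 5 => ⟨!![0, -1; 1, 1], by simp [Matrix.det_fin_two_of]⟩

/-- The ring homomorphism `ℤ[i] → ℤ/2`, `i ↦ 1`. -/
def phi : GaussianInt →+* ZMod 2 := Zsqrtd.lift ⟨1, by decide⟩

theorem phi_apply (z : GaussianInt) : phi z = ((z.re + z.im : ℤ) : ZMod 2) := by
  simp [phi]

theorem phi_eq_zero (z : GaussianInt) : phi z = 0 ↔ z ∈ Ideal.span {(⟨1, 1⟩ : GaussianInt)} := by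
  rw [phi_apply, ZMod.intCast_zmod_eq_zero_iff_dvd, Ideal.mem_span_singleton]
  constructor
  · rintro ⟨k, hk⟩
    refine ⟨⟨k, k - z.re⟩, ?_⟩
    push_cast at hk
    apply Zsqrtd.ext
    · simp
    · simp
      linarith
  · rintro ⟨w, rfl⟩
    refine ⟨w.re, ?_⟩
    simp
    ring

/-- Reduction `SL(2, ℤ[i]) → SL(2, ℤ/2)`. -/
def psi : SL2Zi →* Matrix.SpecialLinearGroup (Fin 2) (ZMod 2) :=
  Matrix.SpecialLinearGroup.map phi

theorem mem_ker_iff_s5 (g : SL2Zi) : g ∈ (redMap ⟨1, 1⟩).ker ↔ psi g = 1 := by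
  rw [MonoidHom.mem_ker, Matrix.SpecialLinearGroup.ext_iff, Matrix.SpecialLinearGroup.ext_iff]
  refine forall_congr' fun i => forall_congr' fun j => ?_
  have h := phi_eq_zero (g i j - (1 : SL2Zi) i j)
  rw [← Ideal.Quotient.eq_zero_iff_mem, map_sub, map_sub, sub_eq_zero, sub_eq_zero] at h
  have h1 : (Ideal.Quotient.mk (Ideal.span {(⟨1, 1⟩ : GaussianInt)})) ((1 : SL2Zi) i j)
      = (redMap ⟨1, 1⟩ 1) i j := rfl
  have h2 : phi ((1 : SL2Zi) i j) = (psi 1) i j := rfl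
  rw [h1, h2, map_one, map_one] at h
  exact h.symm

theorem psi_PM (g : SL2Zi) (hg : g ∈ PM) : psi g = 1 := by
  obtain ⟨k, rfl⟩ := Subgroup.mem_zpowers_iff.mp hg
  have h : psi (-1) = 1 := by
    ext i j
    have : psi (-1) i j = phi ((-1 : SL2Zi) i j) := rfl
    rw [this]
    fin_cases i <;> fin_cases j <;> simp [phi_apply] <;> decide
  rw [map_zpow, h, one_zpow]

theorem coset_iff (h : SL2Zi) (i : Fin 6) :
    (∃ γ ∈ Gamma ⟨1, 1⟩, QuotientGroup.mk' PM h = γ * QuotientGroup.mk' PM (T i))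
      ↔ psi h = psi (T i) := by
  constructor
  · rintro ⟨_, ⟨k, hk, rfl⟩, he⟩
    rw [← map_mul] at he
    have := psi_PM _ (QuotientGroup.eq.mp he)
    rw [map_mul, map_inv, inv_mul_eq_one, map_mul, (mem_ker_iff_s5 k).mp hk, one_mul] at this
    exact this
  · intro he
    refine ⟨QuotientGroup.mk' PM (h * (T i)⁻¹), ⟨_, ?_, rfl⟩, ?_⟩
    · refine (mem_ker_iff_s5 _).mpr ?_
      rw [map_mul, map_inv, he, mul_inv_cancel]
    · rw [← map_mul, inv_mul_cancel_right]

/-- Entries of the reductions of the `T i`. -/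
def Tbar : Fin 6 → Fin 2 → Fin 2 → ZMod 2
  | 0 => ![![1, 0], ![0, 1]]
  | 1 => ![![0, 1], ![1, 0]]
  | 2 => ![![1, 1], ![0, 1]]
  | 3 => ![![1, 0], ![1, 1]]
  | 4 => ![![1, 1], ![1, 0]]
  | 5 => ![![0, 1], ![1, 1]]

theorem psi_T (n : Fin 6) (i j : Fin 2) : psi (T n) i j = Tbar n i j := by
  have : psi (T n) i j = phi (T n i j) := rfl
  rw [this, phi_apply]
  fin_cases n <;> fin_cases i <;> fin_cases j <;> simp [T, Tbar] <;> decide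

theorem finite_check : ∀ a b c d : ZMod 2, a * d - b * c = 1 →
    ∃ n : Fin 6, (a = Tbar n 0 0 ∧ b = Tbar n 0 1 ∧ c = Tbar n 1 0 ∧ d = Tbar n 1 1) ∧
      ∀ m : Fin 6, (a = Tbar m 0 0 ∧ b = Tbar m 0 1 ∧ c = Tbar m 1 0 ∧ d = Tbar m 1 1) →
        m = n := by
  decide

theorem psi_eq_iff (h : SL2Zi) (n : Fin 6) : psi h = psi (T n) ↔
    (psi h 0 0 = Tbar n 0 0 ∧ psi h 0 1 = Tbar n 0 1 ∧ psi h 1 0 = Tbar n 1 0 ∧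
      psi h 1 1 = Tbar n 1 1) := by
  rw [Matrix.SpecialLinearGroup.ext_iff]
  simp only [psi_T, Fin.forall_fin_two, and_assoc]

/-- Every element of `PSL(2, ℤ[i])` is `γ · (image of T_i)` for a unique `i ∈ {0,…,5}` and some
`γ ∈ Γ(1+i)`: the images of `T₀, …, T₅` form a complete system of right coset representatives
for `Γ(1+i)` in `PSL(2, ℤ[i])`. -/
theorem T_complete_coset_representatives :
    ∀ g : PSL2Zi, ∃! i : Fin 6, ∃ γ ∈ Gamma ⟨1, 1⟩, g = γ * QuotientGroup.mk' PM (T i) := by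
  intro g
  obtain ⟨h, rfl⟩ := QuotientGroup.mk'_surjective PM g
  simp only [coset_iff, psi_eq_iff]
  have hd := (psi h).det_coe
  rw [Matrix.det_fin_two] at hd
  obtain ⟨n, hn, hu⟩ := finite_check _ _ _ _ hd
  exact ⟨n, hn, hu⟩
end

section
/- Define V : ℝ → ℝ by V(ρ) = 4π·∫₀^ρ sinh²(s) ds and r : (0,∞) → ℝ by r(x) = log(coth(x/2)). Suppose t₀ > 0 satisfies V(r(t₀)) = 0.47. Then 16 · (2 · 0.94 · ∫₀^{t₀/2} cosh³(t) dt) > 8π²/3; that is, sixteen disjoint tubular neighbourhoods, each of volume 𝒱′(0.94) = 2·0.94·∫₀^{d₄(0.94)} cosh³(t) dt with d₄(A) = (1/2)·(V∘r)⁻¹(A/2), have total volume exceeding the volume 8π²/3 of an orientable hyperbolic 4-manifold of Euler characteristic 2. -/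
open Real

/-- `V ρ = 4π ∫₀^ρ sinh² s ds`, the volume of a ball of radius `ρ` in hyperbolic 3-space. -/
noncomputable def V (ρ : ℝ) : ℝ := 4 * π * ∫ s in (0 : ℝ)..ρ, Real.sinh s ^ 2

/-- `r x = log (coth (x/2))`. -/
noncomputable def r (x : ℝ) : ℝ := Real.log (Real.cosh (x / 2) / Real.sinh (x / 2))

/-- If `t₀ > 0` satisfies `V(r(t₀)) = 0.47` (so that `d₄(0.94) = t₀/2`), then sixteen disjoint
tubular neighbourhoods, each of volume `𝒱′(0.94) = 2·0.94·∫₀^{t₀/2} cosh³ t dt`, have total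
volume exceeding `8π²/3`, the volume of an orientable hyperbolic 4-manifold of Euler
characteristic 2. -/
theorem sixteen_tubes_exceed_volume (t₀ : ℝ) (ht₀ : 0 < t₀) (h : V (r t₀) = 0.47) :
    16 * (2 * 0.94 * ∫ t in (0 : ℝ)..(t₀ / 2), Real.cosh t ^ 3) > 8 * π ^ 2 / 3 := by
  set s := Real.sinh (t₀ / 2) with hs
  have hspos : 0 < s := Real.sinh_pos_iff.2 (by linarith)
  have hcpos : 0 < Real.cosh (t₀ / 2) := Real.cosh_pos _
  have hcs : Real.cosh (t₀ / 2) ^ 2 = s ^ 2 + 1 := Real.cosh_sq _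
  -- the integral of cosh cubed
  have hint : ∫ t in (0 : ℝ)..(t₀ / 2), Real.cosh t ^ 3 = s + s ^ 3 / 3 := by
    have hd : ∀ x ∈ Set.uIcc (0 : ℝ) (t₀ / 2),
        HasDerivAt (fun x => Real.sinh x + Real.sinh x ^ 3 / 3) (Real.cosh x ^ 3) x := by
      intro x _
      have h1 := (Real.hasDerivAt_sinh x).add (((Real.hasDerivAt_sinh x).pow 3).div_const 3)
      have h2 := Real.cosh_sq x
      refine h1.congr_deriv ?_
      norm_num
      linear_combination (-Real.cosh x) * h2
    rw [intervalIntegral.integral_eq_sub_of_hasDerivAt hd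
      ((by fun_prop : Continuous fun t => Real.cosh t ^ 3).intervalIntegrable _ _)]
    simp [hs]
  have hs745 : 0.745 ≤ s := by
    by_contra hlt
    push Not at hlt
    have hρ : 1 / 2 ≤ r t₀ := by
      unfold r
      rw [Real.le_log_iff_exp_le (by positivity)]
      refine (sq_le_sq₀ (by positivity) (by positivity)).1 ?_
      rw [div_pow, hcs, le_div_iff₀ (by positivity), ← Real.exp_nat_mul]
      have he := Real.exp_one_lt_d9
      have hs2 : s ^ 2 < 0.745 ^ 2 := pow_lt_pow_left₀ hlt hspos.le (by norm_num)
      norm_num at he hs2 ⊢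
      nlinarith [sq_nonneg s]
    have hV : (1 / 2 : ℝ) ^ 3 / 3 ≤ ∫ s in (0 : ℝ)..(r t₀), Real.sinh s ^ 2 := by
      have h1 : ∫ x in (0 : ℝ)..(r t₀), x ^ 2 ≤ ∫ s in (0 : ℝ)..(r t₀), Real.sinh s ^ 2 := by
        apply intervalIntegral.integral_mono_on (by linarith)
        · exact (by fun_prop : Continuous fun t : ℝ => t ^ 2).intervalIntegrable _ _
        · exact (by fun_prop : Continuous fun t => Real.sinh t ^ 2).intervalIntegrable _ _
        · intro x hx
          exact pow_le_pow_left₀ hx.1 (Real.self_le_sinh_iff.2 hx.1) 2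
      rw [integral_pow] at h1
      have h2 : (1 / 2 : ℝ) ^ 3 ≤ r t₀ ^ 3 := pow_le_pow_left₀ (by norm_num) hρ 3
      norm_num at h1 h2 ⊢
      linarith
    unfold V at h
    have := Real.pi_gt_three
    norm_num at h hV
    nlinarith
  have h3 : (0.745 : ℝ) ^ 3 ≤ s ^ 3 := pow_le_pow_left₀ (by norm_num) hs745 3
  have hpi : π ^ 2 < 3.15 ^ 2 := pow_lt_pow_left₀ Real.pi_lt_d2 Real.pi_pos.le (by norm_num)
  rw [hint]
  norm_num at h3 hpi hs745 ⊢
  linarith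
end
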